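/- KP^P proves Σ1^P-Foundation: in any model of KP^P, every nonempty class definable by a Σ1^P formula with parameters has an ∈-least element. -/

import Mathlib

universe u

/-- de Bruijn-style formulas of the language of set theory, with primitive
bounded quantifiers (`∈`-bounded and `⊆`-bounded) and unbounded quantifiers.
`SF n` is the type of formulas with (at most) `n` free variables. -/
inductive SF : ℕ → Type
  | mem {n} (i j : Fin n) : SF n
  | eq {n} (i j : Fin n) : SF n
  | not {n} (φ : SF n) : SF n
  | and {n} (φ ψ : SF n) : SF n
  | or {n} (φ ψ : SF n) : SF n
  | bexMem {n} (i : Fin n) (φ : SF (n + 1)) : SF n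
  | ballMem {n} (i : Fin n) (φ : SF (n + 1)) : SF n
  | bexSub {n} (i : Fin n) (φ : SF (n + 1)) : SF n
  | ballSub {n} (i : Fin n) (φ : SF (n + 1)) : SF n
  | ex {n} (φ : SF (n + 1)) : SF n
  | all {n} (φ : SF (n + 1)) : SF n

variable {X : Type u}

/-- `a ⊆ b` in the structure `⟨X, E⟩`. -/
def SubE (E : X → X → Prop) (a b : X) : Prop := ∀ z, E z a → E z b

/-- Satisfaction of a formula in the structure `⟨X, E⟩` under a valuation. -/
def SF.Eval (E : X → X → Prop) : {n : ℕ} → SF n → (Fin n → X) → Prop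
  | _, .mem i j, v => E (v i) (v j)
  | _, .eq i j, v => v i = v j
  | _, .not φ, v => ¬ φ.Eval E v
  | _, .and φ ψ, v => φ.Eval E v ∧ ψ.Eval E v
  | _, .or φ ψ, v => φ.Eval E v ∨ ψ.Eval E v
  | _, .bexMem i φ, v => ∃ x, E x (v i) ∧ φ.Eval E (Fin.snoc v x)
  | _, .ballMem i φ, v => ∀ x, E x (v i) → φ.Eval E (Fin.snoc v x)
  | _, .bexSub i φ, v => ∃ x, SubE E x (v i) ∧ φ.Eval E (Fin.snoc v x)
  | _, .ballSub i φ, v => ∀ x, SubE E x (v i) → φ.Eval E (Fin.snoc v x)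
  | _, .ex φ, v => ∃ x, φ.Eval E (Fin.snoc v x)
  | _, .all φ, v => ∀ x, φ.Eval E (Fin.snoc v x)

/-- `Δ₀` formulas: only `∈`-bounded quantifiers. -/
def SF.IsDelta0 : {n : ℕ} → SF n → Prop
  | _, .mem _ _ => True
  | _, .eq _ _ => True
  | _, .not φ => φ.IsDelta0
  | _, .and φ ψ => φ.IsDelta0 ∧ ψ.IsDelta0
  | _, .or φ ψ => φ.IsDelta0 ∧ ψ.IsDelta0
  | _, .bexMem _ φ => φ.IsDelta0
  | _, .ballMem _ φ => φ.IsDelta0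
  | _, .bexSub _ _ => False
  | _, .ballSub _ _ => False
  | _, .ex _ => False
  | _, .all _ => False

/-- Takahashi's class `Δ₀^𝒫`: only `∈`-bounded and `⊆`-bounded quantifiers. -/
def SF.IsDelta0P : {n : ℕ} → SF n → Prop
  | _, .mem _ _ => True
  | _, .eq _ _ => True
  | _, .not φ => φ.IsDelta0P
  | _, .and φ ψ => φ.IsDelta0P ∧ ψ.IsDelta0P
  | _, .or φ ψ => φ.IsDelta0P ∧ ψ.IsDelta0P
  | _, .bexMem _ φ => φ.IsDelta0P
  | _, .ballMem _ φ => φ.IsDelta0P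
  | _, .bexSub _ φ => φ.IsDelta0P
  | _, .ballSub _ φ => φ.IsDelta0P
  | _, .ex _ => False
  | _, .all _ => False

def Delta0C : ∀ n, SF n → Prop := fun _ φ => φ.IsDelta0
def Delta0PC : ∀ n, SF n → Prop := fun _ φ => φ.IsDelta0P
def Sigma1C : ∀ n, SF n → Prop := fun _ φ => ∃ ψ, ψ.IsDelta0 ∧ φ = SF.ex ψ
def Pi1C : ∀ n, SF n → Prop := fun _ φ => ∃ ψ, ψ.IsDelta0 ∧ φ = SF.all ψ
def Sigma1PC : ∀ n, SF n → Prop := fun _ φ => ∃ ψ, ψ.IsDelta0P ∧ φ = SF.ex ψ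
def Pi1PC : ∀ n, SF n → Prop := fun _ φ => ∃ ψ, ψ.IsDelta0P ∧ φ = SF.all ψ
def FullC : ∀ n, SF n → Prop := fun _ _ => True

/-- A Gödel numbering of formulas. -/
def SF.encode : {n : ℕ} → SF n → ℕ
  | _, .mem i j => Nat.pair 0 (Nat.pair i.val j.val)
  | _, .eq i j => Nat.pair 1 (Nat.pair i.val j.val)
  | _, .not φ => Nat.pair 2 φ.encode
  | _, .and φ ψ => Nat.pair 3 (Nat.pair φ.encode ψ.encode)
  | _, .or φ ψ => Nat.pair 4 (Nat.pair φ.encode ψ.encode)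
  | _, .bexMem i φ => Nat.pair 5 (Nat.pair i.val φ.encode)
  | _, .ballMem i φ => Nat.pair 6 (Nat.pair i.val φ.encode)
  | _, .bexSub i φ => Nat.pair 7 (Nat.pair i.val φ.encode)
  | _, .ballSub i φ => Nat.pair 8 (Nat.pair i.val φ.encode)
  | _, .ex φ => Nat.pair 9 φ.encode
  | _, .all φ => Nat.pair 10 φ.encode

/-- A theory (set of sentences) is recursively enumerable if the set of Gödel
numbers of its members is the domain of a partial recursive function. -/
def REset (S : Set (SF 0)) : Prop :=
  ∃ f : ℕ →. ℕ, Nat.Partrec f ∧ ∀ φ : SF 0, φ ∈ S ↔ SF.encode φ ∈ f.Dom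

/-- `⟨X, E⟩ ⊨ S` for a set `S` of sentences. -/
def SatT (E : X → X → Prop) (S : Set (SF 0)) : Prop :=
  ∀ φ ∈ S, SF.Eval E φ (fun i => i.elim0)

/-! ## Axioms and axiom schemes -/

def ExtensionalityAx (E : X → X → Prop) : Prop := ∀ a b, (∀ z, E z a ↔ E z b) → a = b
def EmptySetAx (E : X → X → Prop) : Prop := ∃ a, ∀ z, ¬ E z a
def PairAx (E : X → X → Prop) : Prop := ∀ x y, ∃ a, ∀ z, E z a ↔ (z = x ∨ z = y)
def UnionAx (E : X → X → Prop) : Prop := ∀ a, ∃ b, ∀ z, E z b ↔ ∃ y, E y a ∧ E z y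
def SetDiffAx (E : X → X → Prop) : Prop := ∀ a b, ∃ c, ∀ z, E z c ↔ (E z a ∧ ¬ E z b)
def PowerAx (E : X → X → Prop) : Prop := ∀ a, ∃ p, ∀ z, E z p ↔ SubE E z a
def TransSet (E : X → X → Prop) (t : X) : Prop := ∀ y, E y t → ∀ z, E z y → E z t
def TCoAx (E : X → X → Prop) : Prop := ∀ a, ∃ t, TransSet E t ∧ SubE E a t
def SuccOf (E : X → X → Prop) (x s : X) : Prop := ∀ z, E z s ↔ (E z x ∨ z = x)
def InductiveSet (E : X → X → Prop) (a : X) : Prop :=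
  (∃ e, E e a ∧ ∀ z, ¬ E z e) ∧ ∀ x, E x a → ∃ s, E s a ∧ SuccOf E x s
def InfinityAx (E : X → X → Prop) : Prop := ∃ a, InductiveSet E a
def SetFoundationAx (E : X → X → Prop) : Prop :=
  ∀ z, (∃ x, E x z) → ∃ y, E y z ∧ ∀ x, E x y → ¬ E x z
/-- The axiom of choice: every set of pairwise disjoint nonempty sets has a transversal. -/
def ACAx (E : X → X → Prop) : Prop :=
  ∀ a, (∀ x, E x a → ∃ z, E z x) →
    (∀ x y, E x a → E y a → x ≠ y → ∀ z, E z x → ¬ E z y) →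
    ∃ c, ∀ x, E x a → ∃! z, E z c ∧ E z x

def SeparationScheme (E : X → X → Prop) (C : ∀ n, SF n → Prop) : Prop :=
  ∀ (n : ℕ) (φ : SF (n + 1)), C _ φ → ∀ (p : Fin n → X) (w : X),
    ∃ y, ∀ x, E x y ↔ (E x w ∧ φ.Eval E (Fin.snoc p x))

def CollectionScheme (E : X → X → Prop) (C : ∀ n, SF n → Prop) : Prop :=
  ∀ (n : ℕ) (φ : SF (n + 2)), C _ φ → ∀ (p : Fin n → X) (w : X),
    (∀ x, E x w → ∃ y, φ.Eval E (Fin.snoc (Fin.snoc p x) y)) →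
    ∃ c, ∀ x, E x w → ∃ y, E y c ∧ φ.Eval E (Fin.snoc (Fin.snoc p x) y)

def FoundationScheme (E : X → X → Prop) (C : ∀ n, SF n → Prop) : Prop :=
  ∀ (n : ℕ) (φ : SF (n + 1)), C _ φ → ∀ p : Fin n → X,
    (∃ x, φ.Eval E (Fin.snoc p x)) →
    ∃ y, φ.Eval E (Fin.snoc p y) ∧ ∀ x, E x y → ¬ φ.Eval E (Fin.snoc p x)

/-! ## Theories -/

def ModelMminus (E : X → X → Prop) : Prop :=
  ExtensionalityAx E ∧ EmptySetAx E ∧ PairAx E ∧ UnionAx E ∧ SetDiffAx E ∧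
    TCoAx E ∧ InfinityAx E ∧ SeparationScheme E Delta0C ∧ SetFoundationAx E

def ModelM (E : X → X → Prop) : Prop := ModelMminus E ∧ PowerAx E

def ModelKP (E : X → X → Prop) : Prop :=
  ExtensionalityAx E ∧ PairAx E ∧ UnionAx E ∧ SeparationScheme E Delta0C ∧
    CollectionScheme E Delta0C ∧ FoundationScheme E Pi1C

def ModelKPP (E : X → X → Prop) : Prop :=
  ModelM E ∧ CollectionScheme E Delta0PC ∧ FoundationScheme E Pi1PC

def ModelMOST (E : X → X → Prop) : Prop :=
  ModelM E ∧ SeparationScheme E Sigma1C ∧ ACAx E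

def ModelZF (E : X → X → Prop) : Prop :=
  ExtensionalityAx E ∧ EmptySetAx E ∧ PairAx E ∧ UnionAx E ∧ PowerAx E ∧
    InfinityAx E ∧ SeparationScheme E FullC ∧ CollectionScheme E FullC ∧
    FoundationScheme E FullC

/-! ## Internal set-theoretic machinery -/

/-- `p = {{x}, {x, y}}` (Kuratowski pair). -/
def IsPair (E : X → X → Prop) (p x y : X) : Prop :=
  ∀ z, E z p ↔ ((∀ w, E w z ↔ w = x) ∨ (∀ w, E w z ↔ (w = x ∨ w = y)))

def FunApp (E : X → X → Prop) (f x y : X) : Prop := ∃ q, E q f ∧ IsPair E q x y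

/-- `f` is a function with domain `d`. -/
def IsFuncOn (E : X → X → Prop) (f d : X) : Prop :=
  (∀ q, E q f → ∃ x y, IsPair E q x y ∧ E x d) ∧
  (∀ x y y', FunApp E f x y → FunApp E f x y' → y = y') ∧
  (∀ x, E x d → ∃ y, FunApp E f x y)

/-- `f` is an injective function from `dom` into `cod`. -/
def InjFunInto (E : X → X → Prop) (f dom cod : X) : Prop :=
  IsFuncOn E f dom ∧ (∀ x y, FunApp E f x y → E y cod) ∧
  (∀ x x' y, FunApp E f x y → FunApp E f x' y → x = x')

/-- `|t| ≤ |κ|`. -/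
def CardLe (E : X → X → Prop) (t κ : X) : Prop := ∃ f, InjFunInto E f t κ

def IsOrdinal (E : X → X → Prop) (x : X) : Prop :=
  TransSet E x ∧ ∀ y, E y x → TransSet E y

/-- An (initial ordinal =) cardinal: an ordinal that does not inject into any of
its members. -/
def IsCardinal (E : X → X → Prop) (κ : X) : Prop :=
  IsOrdinal E κ ∧ ∀ β, E β κ → ¬ CardLe E κ β

/-- `t` is the transitive closure of the set `x`. -/
def IsTCset (E : X → X → Prop) (t x : X) : Prop :=
  TransSet E t ∧ SubE E x t ∧ ∀ u, TransSet E u → SubE E x u → SubE E t u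

/-- `t` is the transitive closure of `{x}`. -/
def IsTCsingleton (E : X → X → Prop) (t x : X) : Prop :=
  TransSet E t ∧ E x t ∧ ∀ u, TransSet E u → E x u → SubE E t u

def IsOmega (E : X → X → Prop) (w : X) : Prop :=
  InductiveSet E w ∧ ∀ a, InductiveSet E a → SubE E w a

/-- `⟨X, E⟩` is `ω`-standard: its internal natural numbers are order-isomorphic
to the standard natural numbers. -/
def OmegaStandard (E : X → X → Prop) : Prop :=
  ∀ w, IsOmega E w → ∃ f : ℕ → X, (∀ n, E (f n) w) ∧ (∀ x, E x w → ∃ n, x = f n) ∧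
    ∀ m n : ℕ, (E (f m) (f n) ↔ m < n)

/-- `f` is (a function coding) the cumulative hierarchy `β ↦ V_β` for `β ∈ α`,
using `V_β = ⋃_{γ∈β} 𝒫(V_γ)`. -/
def IsRK (E : X → X → Prop) (α f : X) : Prop :=
  IsOrdinal E α ∧ IsFuncOn E f α ∧
  ∀ β vβ, E β α → FunApp E f β vβ →
    ∀ x, E x vβ ↔ ∃ γ, E γ β ∧ ∃ vγ, FunApp E f γ vγ ∧ SubE E x vγ

/-- Internal rank comparison `ρ(x) ≤ ρ(y)`: `x` belongs to every stage of the
cumulative hierarchy that `y` belongs to. -/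
def RankLe (E : X → X → Prop) (x y : X) : Prop :=
  ∀ α f β v, IsRK E α f → E β α → FunApp E f β v → E y v → E x v

/-- External `n`-th von Neumann natural number. -/
def IsVN (E : X → X → Prop) : ℕ → X → Prop
  | 0, x => ∀ z, ¬ E z x
  | (n + 1), x => ∃ y, IsVN E n y ∧ SuccOf E y x

/-- `a` is the `n`-th infinite cardinal `ℵ_n` (for external `n`, as computed in
the model): `ℵ₀ = ω`, and `ℵ_{n+1}` is the least cardinal above `ℵ_n`. -/
def IsAleph (E : X → X → Prop) : ℕ → X → Prop
  | 0, a => IsOmega E a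
  | (n + 1), a => ∃ b, IsAleph E n b ∧ IsCardinal E a ∧ E b a ∧
      ∀ c, IsCardinal E c → E b c → (c = a ∨ E a c)

/-- `a` is the cardinal `ℵ_ω` of the model: the least limit cardinal above `ω`. -/
def IsAlephOmega (E : X → X → Prop) (a : X) : Prop :=
  (IsCardinal E a ∧ (∃ w, IsOmega E w ∧ E w a) ∧
    (∀ β, E β a → ∃ μ, IsCardinal E μ ∧ E β μ ∧ E μ a)) ∧
  ∀ a', (IsCardinal E a' ∧ (∃ w, IsOmega E w ∧ E w a') ∧
    (∀ β, E β a' → ∃ μ, IsCardinal E μ ∧ E β μ ∧ E μ a')) → (a = a' ∨ E a a')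

/-! ## Internal satisfaction and the constructible hierarchy (for `V = L`) -/

/-- `c = ⟨n, a⟩` with the tag `n` an external natural (internally coded). -/
def TaggedBy (E : X → X → Prop) (c : X) (n : ℕ) (a : X) : Prop :=
  ∃ t, IsVN E n t ∧ IsPair E c t a

def CodeMem (E : X → X → Prop) (c i j : X) : Prop := ∃ p, IsPair E p i j ∧ TaggedBy E c 0 p
def CodeEq (E : X → X → Prop) (c i j : X) : Prop := ∃ p, IsPair E p i j ∧ TaggedBy E c 1 p
def CodeNot (E : X → X → Prop) (c' c : X) : Prop := TaggedBy E c' 2 c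
def CodeAnd (E : X → X → Prop) (c' c₁ c₂ : X) : Prop := ∃ p, IsPair E p c₁ c₂ ∧ TaggedBy E c' 3 p
def CodeEx (E : X → X → Prop) (c' i c : X) : Prop := ∃ p, IsPair E p i c ∧ TaggedBy E c' 4 p

/-- `d` is closed under the internal formation rules for codes of formulas with
variables indexed by elements of `w` (the internal `ω`). -/
def ClosedCode (E : X → X → Prop) (w d : X) : Prop :=
  (∀ i j c, E i w → E j w → CodeMem E c i j → E c d) ∧
  (∀ i j c, E i w → E j w → CodeEq E c i j → E c d) ∧
  (∀ c c', E c d → CodeNot E c' c → E c' d) ∧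
  (∀ c₁ c₂ c', E c₁ d → E c₂ d → CodeAnd E c' c₁ c₂ → E c' d) ∧
  (∀ i c c', E i w → E c d → CodeEx E c' i c → E c' d)

/-- `c` is an internal code of a first-order formula of the language of set theory. -/
def FormCode (E : X → X → Prop) (w c : X) : Prop := ∀ d, ClosedCode E w d → E c d

/-- An internal assignment of elements of `a` to the variables. -/
def IsAssign (E : X → X → Prop) (w a v : X) : Prop :=
  IsFuncOn E v w ∧ ∀ i y, FunApp E v i y → E y a

/-- `v' = v[i ↦ x]`. -/
def UpdateAssign (E : X → X → Prop) (w v : X) (i x v' : X) : Prop :=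
  FunApp E v' i x ∧ ∀ j, E j w → j ≠ i → ∀ y, (FunApp E v j y ↔ FunApp E v' j y)

def PairIn (E : X → X → Prop) (s c v : X) : Prop := ∃ q, E q s ∧ IsPair E q c v

/-- `s` is a (full) satisfaction class for the set structure `⟨a, E⟩`: a set of
pairs ⟨code, assignment⟩ obeying the Tarski conditions. -/
def SatSet (E : X → X → Prop) (w a s : X) : Prop :=
  (∀ q, E q s → ∃ c v, IsPair E q c v ∧ FormCode E w c ∧ IsAssign E w a v) ∧
  (∀ i j c v xi xj, E i w → E j w → CodeMem E c i j → IsAssign E w a v →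
    FunApp E v i xi → FunApp E v j xj → (PairIn E s c v ↔ E xi xj)) ∧
  (∀ i j c v xi xj, E i w → E j w → CodeEq E c i j → IsAssign E w a v →
    FunApp E v i xi → FunApp E v j xj → (PairIn E s c v ↔ xi = xj)) ∧
  (∀ c c' v, FormCode E w c → CodeNot E c' c → IsAssign E w a v →
    (PairIn E s c' v ↔ ¬ PairIn E s c v)) ∧
  (∀ c₁ c₂ c' v, FormCode E w c₁ → FormCode E w c₂ → CodeAnd E c' c₁ c₂ →
    IsAssign E w a v → (PairIn E s c' v ↔ (PairIn E s c₁ v ∧ PairIn E s c₂ v))) ∧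
  (∀ i c c' v, E i w → FormCode E w c → CodeEx E c' i c → IsAssign E w a v →
    (PairIn E s c' v ↔ ∃ x v', E x a ∧ IsAssign E w a v' ∧ UpdateAssign E w v i x v' ∧
      PairIn E s c v'))

/-- `b` is a subset of `a` definable over `⟨a, E⟩` (with parameters from `a`). -/
def DefSub (E : X → X → Prop) (w a s b : X) : Prop :=
  SubE E b a ∧ ∃ c, FormCode E w c ∧ ∃ v, IsAssign E w a v ∧ ∃ i, E i w ∧
    ∀ x, E x b ↔ (E x a ∧ ∃ v', IsAssign E w a v' ∧ UpdateAssign E w v i x v' ∧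
      PairIn E s c v')

/-- `f` codes the constructible hierarchy `β ↦ L_β` for `β ∈ α`, using
`L_β = ⋃_{γ∈β} Def(L_γ)`. -/
def IsLHier (E : X → X → Prop) (w f α : X) : Prop :=
  IsOrdinal E α ∧ IsFuncOn E f α ∧
  ∀ β vβ, E β α → FunApp E f β vβ →
    ∀ x, E x vβ ↔ ∃ γ, E γ β ∧ ∃ vγ, FunApp E f γ vγ ∧ ∃ s, SatSet E w vγ s ∧
      DefSub E w vγ s x

/-- The axiom `V = L`: every set belongs to some level of the constructible hierarchy. -/
def VeqL (E : X → X → Prop) : Prop :=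
  ∀ w, IsOmega E w → ∀ x, ∃ α f β vβ, IsLHier E w f α ∧ E β α ∧ FunApp E f β vβ ∧ E x vβ

/-! ## Extensions -/

/-- The substructure of `⟨X, E⟩` with underlying set `A`. -/
def restrict (E : X → X → Prop) (A : Set X) : A → A → Prop := fun a b => E a.1 b.1

/-- `B` is an end extension of `A` (both substructures of an ambient `⟨X, E⟩`). -/
def EndExtIn (E : X → X → Prop) (A B : Set X) : Prop :=
  A ⊆ B ∧ ∀ x y, x ∈ B → y ∈ A → E x y → x ∈ A

/-- `B` is a powerset-preserving end extension of `A` (within an ambient `⟨X, E⟩`);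
`x ⊆ y` is computed in `B`. -/
def PowExtIn (E : X → X → Prop) (A B : Set X) : Prop :=
  EndExtIn E A B ∧ ∀ x y, x ∈ B → y ∈ A → (∀ z, z ∈ B → E z x → E z y) → x ∈ A

/-- The whole structure `⟨X, E⟩` is an end extension of its substructure on `A`. -/
def EndExtSet (E : X → X → Prop) (A : Set X) : Prop :=
  ∀ x y, y ∈ A → E x y → x ∈ A

/-- `⟨X, E⟩` is a powerset-preserving end extension of its substructure on `A`. -/
def PowExtSet (E : X → X → Prop) (A : Set X) : Prop :=
  EndExtSet E A ∧ ∀ x y, y ∈ A → SubE E x y → x ∈ A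

/-- `⟨X, E⟩` is a rank extension of its substructure on `A`. -/
def RankExtSet (E : X → X → Prop) (A : Set X) : Prop :=
  PowExtSet E A ∧ ∀ x y, y ∈ A → RankLe E x y → x ∈ A

/-- The extension `⟨X, E⟩` of its substructure on `A` is proper and topless. -/
def ToplessSet (E : X → X → Prop) (A : Set X) : Prop :=
  A ≠ Set.univ ∧ ∀ c, (∀ x, E x c → x ∈ A) → c ∈ A

/-- The extension `⟨X, E⟩` of its substructure on `A` is proper and blunt (not topless). -/
def BluntSet (E : X → X → Prop) (A : Set X) : Prop :=
  A ≠ Set.univ ∧ ¬ ToplessSet E A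

/-! ## Weak dependent choice -/

/-- `δ_ω^φ(b, f, p)`: `f` is a function on `ω` with `f(0) = {b}` tracing the
`φ`-successor relation. -/
def IsWDCWitness (E : X → X → Prop) {n : ℕ} (φ : SF (n + 2)) (p : Fin n → X)
    (w b f : X) : Prop :=
  IsFuncOn E f w ∧
  (∃ z v, (∀ u, ¬ E u z) ∧ E z w ∧ FunApp E f z v ∧ ∀ t, E t v ↔ t = b) ∧
  ∀ m m' vm vm', E m w → SuccOf E m m' → E m' w → FunApp E f m vm → FunApp E f m' vm' →
    ((∀ x, E x vm → ∃ y, E y vm' ∧ φ.Eval E (Fin.snoc (Fin.snoc p x) y)) ∧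
     (∀ y, E y vm' → ∀ x, E x vm → φ.Eval E (Fin.snoc (Fin.snoc p x) y)))

/-- The scheme `Δ₀^𝒫-WDC_ω`. -/
def WDComega (E : X → X → Prop) : Prop :=
  ∀ (n : ℕ) (φ : SF (n + 2)), Delta0PC _ φ → ∀ p : Fin n → X,
    (∀ x, ∃ y, φ.Eval E (Fin.snoc (Fin.snoc p x) y)) →
    ∀ w, IsOmega E w → ∀ b, ∃ f, IsWDCWitness E φ p w b f

/-! ## Internal well-founded extensional relations (for `H_{≤κ}`) -/

def RRel (E : X → X → Prop) (R a b : X) : Prop := ∃ p, E p R ∧ IsPair E p a b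

def RelOn (E : X → X → Prop) (R k : X) : Prop :=
  ∀ p, E p R → ∃ a b, IsPair E p a b ∧ E a k ∧ E b k

/-- `BFEXT(R, k)`: `R ⊆ k × k` is extensional on `k`, has a top element, and every
nonempty subset of `k` has an `R`-minimal element. -/
def BFEXT (E : X → X → Prop) (R k : X) : Prop :=
  RelOn E R k ∧
  (∀ a b, E a k → E b k → (∀ c, E c k → (RRel E R c a ↔ RRel E R c b)) → a = b) ∧
  (∃ t, E t k ∧ ∀ b, E b k → b ≠ t → RRel E R b t) ∧
  (∀ S, SubE E S k → (∃ z, E z S) → ∃ m, E m S ∧ ∀ y, E y S → ¬ RRel E R y m)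

/-- `f` is an isomorphism of `⟨k, R⟩` with `⟨T, ∈⟩`. -/
def IsoOnto (E : X → X → Prop) (R k f T : X) : Prop :=
  IsFuncOn E f k ∧ (∀ x y, FunApp E f x y → E y T) ∧
  (∀ y, E y T → ∃ x, E x k ∧ FunApp E f x y) ∧
  (∀ x x' y, FunApp E f x y → FunApp E f x' y → x = x') ∧
  ∀ a b ya yb, E a k → E b k → FunApp E f a ya → FunApp E f b yb →
    (RRel E R a b ↔ E ya yb)

/-- The predicate `Xv = H_{≤κ} = {x : |TC(x)| ≤ κ}`. -/
def HleqPred (E : X → X → Prop) (Xv κ : X) : Prop :=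
  IsCardinal E κ ∧ ∀ x, E x Xv ↔ ∃ t, IsTCset E t x ∧ CardLe E t κ

/-- The explicit conjunction (i) ∧ (ii) ∧ (iii) asserting `Xv = H_{≤κ}`. -/
def ExplicitH (E : X → X → Prop) (Xv κ : X) : Prop :=
  IsCardinal E κ ∧
  (∀ R, BFEXT E R κ → ∃ x f T, E x Xv ∧ E f Xv ∧ E T Xv ∧ IsTCsingleton E T x ∧
    IsoOnto E R κ f T) ∧
  (∀ x, E x Xv → ∃ T f, E T Xv ∧ E f Xv ∧ IsTCsingleton E T x ∧ InjFunInto E f T κ)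

/-! # Proof -/

namespace KPPProof

/-- Lift a renaming under a binder. -/
def lift {n m : ℕ} (f : Fin n → Fin m) : Fin (n + 1) → Fin (m + 1) :=
  Fin.snoc (α := fun _ => Fin (m + 1)) (fun i => (f i).castSucc) (Fin.last m)

/-- Renaming of variables. -/
def ren : {n : ℕ} → SF n → {m : ℕ} → (Fin n → Fin m) → SF m
  | _, .mem i j, _, f => .mem (f i) (f j)
  | _, .eq i j, _, f => .eq (f i) (f j)
  | _, .not φ, _, f => .not (ren φ f)
  | _, .and φ ψ, _, f => .and (ren φ f) (ren ψ f)
  | _, .or φ ψ, _, f => .or (ren φ f) (ren ψ f)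
  | _, .bexMem i φ, _, f => .bexMem (f i) (ren φ (lift f))
  | _, .ballMem i φ, _, f => .ballMem (f i) (ren φ (lift f))
  | _, .bexSub i φ, _, f => .bexSub (f i) (ren φ (lift f))
  | _, .ballSub i φ, _, f => .ballSub (f i) (ren φ (lift f))
  | _, .ex φ, _, f => .ex (ren φ (lift f))
  | _, .all φ, _, f => .all (ren φ (lift f))

theorem snoc_lift {n m : ℕ} (f : Fin n → Fin m) (v : Fin m → X) (x : X) :
    (fun i => (Fin.snoc v x : Fin (m + 1) → X) (lift f i)) = Fin.snoc (fun i => v (f i)) x := by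
  funext i
  refine Fin.lastCases ?_ (fun j => ?_) i <;> simp [lift]

theorem eval_ren (E : X → X → Prop) {n : ℕ} (φ : SF n) : ∀ {m : ℕ} (f : Fin n → Fin m)
    (v : Fin m → X), (ren φ f).Eval E v ↔ φ.Eval E (fun i => v (f i)) := by
  induction φ <;> intro m f v <;> simp_all [ren, SF.Eval, snoc_lift]

theorem ren_d0 {n : ℕ} (φ : SF n) : ∀ {m : ℕ} (f : Fin n → Fin m),
    φ.IsDelta0 → (ren φ f).IsDelta0 := by
  induction φ <;> intro m f <;> simp_all [ren, SF.IsDelta0]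

theorem ren_d0P {n : ℕ} (φ : SF n) : ∀ {m : ℕ} (f : Fin n → Fin m),
    φ.IsDelta0P → (ren φ f).IsDelta0P := by
  induction φ <;> intro m f <;> simp_all [ren, SF.IsDelta0P]

/-- Classes of formulas with the closure properties we need. -/
class Good (C : ∀ n, SF n → Prop) : Prop where
  mem : ∀ {n} (i j : Fin n), C n (.mem i j)
  eq : ∀ {n} (i j : Fin n), C n (.eq i j)
  not : ∀ {n} (φ : SF n), C n φ → C n (.not φ)
  and : ∀ {n} (φ ψ : SF n), C n φ → C n ψ → C n (.and φ ψ)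
  bexMem : ∀ {n} (i : Fin n) (φ : SF (n + 1)), C _ φ → C n (.bexMem i φ)
  ren : ∀ {n m} (φ : SF n) (f : Fin n → Fin m), C n φ → C m (ren φ f)

instance : Good Delta0C where
  mem _ _ := trivial
  eq _ _ := trivial
  not _ h := h
  and _ _ h h' := ⟨h, h'⟩
  bexMem _ _ h := h
  ren φ f h := ren_d0 φ f h

instance : Good Delta0PC where
  mem _ _ := trivial
  eq _ _ := trivial
  not _ h := h
  and _ _ h h' := ⟨h, h'⟩
  bexMem _ _ h := h
  ren φ f h := ren_d0P φ f h

/-- Value of a variable-or-constant. -/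
def val {n : ℕ} (v : Fin n → X) (c : Fin n ⊕ X) : X := Sum.elim v id c

/-- `P` is definable (with parameters) by a formula in `C`. -/
def Dl (E : X → X → Prop) (C : ∀ n, SF n → Prop) {n : ℕ} (P : (Fin n → X) → Prop) : Prop :=
  ∃ (m : ℕ) (q : Fin m → Fin n ⊕ X) (φ : SF m), C m φ ∧
    ∀ v, P v ↔ φ.Eval E (fun i => val v (q i))

/-- `t` is a variable or a constant. -/
def Tm {n : ℕ} (t : (Fin n → X) → X) : Prop := ∃ c, ∀ v, t v = val v c

theorem Tm.const {n : ℕ} (a : X) : Tm (fun _ : Fin n → X => a) := ⟨Sum.inr a, fun _ => rfl⟩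
theorem Tm.var {n : ℕ} (i : Fin n) : Tm (fun v : Fin n → X => v i) := ⟨Sum.inl i, fun _ => rfl⟩
theorem Tm.init {n : ℕ} {t : (Fin n → X) → X} (h : Tm t) :
    Tm (fun v : Fin (n + 1) → X => t (Fin.init v)) := by
  obtain ⟨c, hc⟩ := h
  rcases c with i | a
  · exact ⟨Sum.inl i.castSucc, fun v => (hc _).trans rfl⟩
  · exact ⟨Sum.inr a, fun v => (hc _).trans rfl⟩

theorem Tm.init2 {n : ℕ} {t : (Fin n → X) → X} (h : Tm t) :
    Tm (fun v : Fin (n + 2) → X => t (Fin.init (Fin.init v))) := h.init.init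
theorem Tm.init3 {n : ℕ} {t : (Fin n → X) → X} (h : Tm t) :
    Tm (fun v : Fin (n + 3) → X => t (Fin.init (Fin.init (Fin.init v)))) := h.init.init.init
theorem Tm.init4 {n : ℕ} {t : (Fin n → X) → X} (h : Tm t) :
    Tm (fun v : Fin (n + 4) → X => t (Fin.init (Fin.init (Fin.init (Fin.init v))))) := h.init.init.init.init
theorem Tm.init5 {n : ℕ} {t : (Fin n → X) → X} (h : Tm t) :
    Tm (fun v : Fin (n + 5) → X => t (Fin.init (Fin.init (Fin.init (Fin.init (Fin.init v)))))) := h.init.init.init.init.init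

section closure
set_option linter.unusedSectionVars false
variable {E : X → X → Prop} {C : ∀ n, SF n → Prop} [Good C] {n : ℕ}

theorem Dl.congr {P Q : (Fin n → X) → Prop} (h : Dl E C P) (e : ∀ v, Q v ↔ P v) : Dl E C Q := by
  have : Q = P := funext fun v => propext (e v)
  rw [this]; exact h

theorem Dl.formula {m : ℕ} (φ : SF m) (hφ : C m φ) (t : Fin m → (Fin n → X) → X)
    (ht : ∀ i, Tm (t i)) : Dl E C (fun v => φ.Eval E (fun i => t i v)) := by
  choose c hc using ht
  refine ⟨m, c, φ, hφ, fun v => ?_⟩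
  simp only [hc]

theorem Dl.subst {m : ℕ} {P : (Fin m → X) → Prop} (h : Dl E C P) (q : Fin m → Fin n ⊕ X) :
    Dl E C (fun v : Fin n → X => P (fun i => val v (q i))) := by
  obtain ⟨k, q', φ, hφ, e⟩ := h
  refine ⟨k, fun i => Sum.elim q Sum.inr (q' i), φ, hφ, fun v => ?_⟩
  refine (e _).trans ?_
  have : (fun i => val (fun i => val v (q i)) (q' i)) =
      (fun i => val v (Sum.elim q Sum.inr (q' i))) := by
    funext i
    cases q' i <;> rfl
  rw [this]

theorem Dl.mem {s t : (Fin n → X) → X} (hs : Tm s) (ht : Tm t) :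
    Dl E C (fun v => E (s v) (t v)) := by
  obtain ⟨c, hc⟩ := hs
  obtain ⟨d, hd⟩ := ht
  refine ⟨2, ![c, d], .mem 0 1, Good.mem _ _, fun v => ?_⟩
  simp [SF.Eval, hc, hd]

theorem Dl.eq {s t : (Fin n → X) → X} (hs : Tm s) (ht : Tm t) :
    Dl E C (fun v => s v = t v) := by
  obtain ⟨c, hc⟩ := hs
  obtain ⟨d, hd⟩ := ht
  refine ⟨2, ![c, d], .eq 0 1, Good.eq _ _, fun v => ?_⟩
  simp [SF.Eval, hc, hd]

theorem Dl.not {P : (Fin n → X) → Prop} (h : Dl E C P) : Dl E C (fun v => ¬ P v) := by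
  obtain ⟨k, q', φ, hφ, e⟩ := h
  exact ⟨k, q', .not φ, Good.not _ hφ, fun v => by simp [SF.Eval, e]⟩

theorem Dl.and {P Q : (Fin n → X) → Prop} (h : Dl E C P) (h' : Dl E C Q) :
    Dl E C (fun v => P v ∧ Q v) := by
  obtain ⟨k, q, φ, hφ, e⟩ := h
  obtain ⟨k', q', ψ, hψ, e'⟩ := h'
  refine ⟨k + k', Fin.append q q', .and (ren φ (Fin.castAdd k')) (ren ψ (Fin.natAdd k)),
    Good.and _ _ (Good.ren _ _ hφ) (Good.ren _ _ hψ), fun v => ?_⟩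
  simp [SF.Eval, e, e', eval_ren]

theorem Dl.imp {P Q : (Fin n → X) → Prop} (h : Dl E C P) (h' : Dl E C Q) :
    Dl E C (fun v => P v → Q v) :=
  (h.and h'.not).not.congr fun v => by tauto

theorem Dl.or {P Q : (Fin n → X) → Prop} (h : Dl E C P) (h' : Dl E C Q) :
    Dl E C (fun v => P v ∨ Q v) :=
  (h.not.and h'.not).not.congr fun v => by tauto

theorem core {m : ℕ} (q : Fin m → Fin (n + 1) ⊕ X) (c : Fin n ⊕ X) :
    ∃ (q2 : Fin m → Fin n ⊕ X) (f : Fin m → Fin (m + 1)), ∀ (v : Fin n → X) (x : X),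
      (fun i => (Fin.snoc (fun i => val v (q2 i)) x : Fin (m + 1) → X) (f i)) =
      (fun i => val (Fin.snoc v x : Fin (n + 1) → X) (q i)) := by
  have key : ∀ i : Fin m, ∃ (d : Fin n ⊕ X) (k : Fin (m + 1)),
      (k = Fin.last m ∧ q i = Sum.inl (Fin.last n)) ∨
      (k = i.castSucc ∧ ∀ (v : Fin n → X) (x : X),
        val v d = val (Fin.snoc v x : Fin (n + 1) → X) (q i)) := by
    intro i
    rcases hq : q i with j | a
    · refine Fin.lastCases ?_ (fun j => ?_) j
      · exact ⟨c, Fin.last m, Or.inl ⟨rfl, rfl⟩⟩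
      · exact ⟨Sum.inl j, i.castSucc, Or.inr ⟨rfl, fun v x => by simp [val]⟩⟩
    · exact ⟨Sum.inr a, i.castSucc, Or.inr ⟨rfl, fun v x => by simp [val]⟩⟩
  choose q2 f h using key
  refine ⟨q2, f, fun v x => ?_⟩
  funext i
  rcases h i with ⟨h1, h2⟩ | ⟨h1, h2⟩
  · rw [h1, h2]; simp [val]
  · rw [h1, ← h2 v x]; simp

theorem quant {P : (Fin n → X) → X → Prop} {t : (Fin n → X) → X} (ht : Tm t)
    (h : Dl E C (fun v : Fin (n + 1) → X => P (Fin.init v) (v (Fin.last n)))) :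
    ∃ (m : ℕ) (q : Fin (m + 1) → Fin n ⊕ X) (φ : SF (m + 1 + 1)), C _ φ ∧
      (∀ v, val v (q (Fin.last m)) = t v) ∧
      ∀ v x, φ.Eval E (Fin.snoc (fun i => val v (q i)) x) ↔ P v x := by
  obtain ⟨c, hc⟩ := ht
  obtain ⟨m, q, φ, hφ, e⟩ := h
  obtain ⟨q2, f, hf⟩ := core q c
  refine ⟨m, Fin.snoc (α := fun _ => Fin n ⊕ X) q2 c, ren φ (fun i => lift Fin.castSucc (f i)),
    Good.ren _ _ hφ, fun v => by simp [hc], fun v x => ?_⟩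
  have e1 := e (Fin.snoc v x)
  simp only [Fin.init_snoc, Fin.snoc_last] at e1
  rw [e1, ← hf, eval_ren]
  have := snoc_lift (Fin.castSucc : Fin m → Fin (m + 1))
    (fun i => val v ((Fin.snoc (α := fun _ => Fin n ⊕ X) q2 c : Fin (m + 1) → Fin n ⊕ X) i)) x
  simp only [Fin.snoc_castSucc] at this
  have h2 := fun i => congrFun this (f i)
  exact iff_of_eq (congrArg _ (funext h2))

theorem Dl.bexMem {P : (Fin n → X) → X → Prop} {t : (Fin n → X) → X} (ht : Tm t)
    (h : Dl E C (fun v : Fin (n + 1) → X => P (Fin.init v) (v (Fin.last n)))) :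
    Dl E C (fun v => ∃ x, E x (t v) ∧ P v x) := by
  obtain ⟨m, q, φ, hφ, h1, h2⟩ := quant ht h
  exact ⟨m + 1, q, .bexMem (Fin.last m) φ, Good.bexMem _ _ hφ, fun v => by
    simp [SF.Eval, h1, h2]⟩

theorem Dl.ballMem {P : (Fin n → X) → X → Prop} {t : (Fin n → X) → X} (ht : Tm t)
    (h : Dl E C (fun v : Fin (n + 1) → X => P (Fin.init v) (v (Fin.last n)))) :
    Dl E C (fun v => ∀ x, E x (t v) → P v x) :=
  (Dl.bexMem (P := fun v x => ¬ P v x) ht h.not).not.congr fun v => by simp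

theorem Dl.sub {s t : (Fin n → X) → X} (hs : Tm s) (ht : Tm t) :
    Dl E C (fun v => SubE E (s v) (t v)) := by
  unfold SubE
  exact Dl.ballMem hs (Dl.mem (Tm.var _) ht.init)

theorem Dl.bexSub {P : (Fin n → X) → X → Prop} {t : (Fin n → X) → X} (ht : Tm t)
    (h : Dl E Delta0PC (fun v : Fin (n + 1) → X => P (Fin.init v) (v (Fin.last n)))) :
    Dl E Delta0PC (fun v => ∃ x, SubE E x (t v) ∧ P v x) := by
  obtain ⟨m, q, φ, hφ, h1, h2⟩ := quant ht h
  exact ⟨m + 1, q, .bexSub (Fin.last m) φ, hφ, fun v => by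
    simp [SF.Eval, h1, h2]⟩

theorem Dl.ballSub {P : (Fin n → X) → X → Prop} {t : (Fin n → X) → X} (ht : Tm t)
    (h : Dl E Delta0PC (fun v : Fin (n + 1) → X => P (Fin.init v) (v (Fin.last n)))) :
    Dl E Delta0PC (fun v => ∀ x, SubE E x (t v) → P v x) :=
  (Dl.bexSub (P := fun v x => ¬ P v x) ht h.not).not.congr fun v => by simp

theorem Dl.extract1 (a : X) {P : X → Prop} (h : Dl E C (fun v : Fin 1 → X => P (v 0))) :
    ∃ (k : ℕ) (p : Fin k → X) (φ : SF (k + 1)), C _ φ ∧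
      ∀ x, P x ↔ φ.Eval E (Fin.snoc p x) := by
  obtain ⟨m, q, φ, hφ, e⟩ := h
  obtain ⟨q2, f, hf⟩ := core q (Sum.inr a)
  refine ⟨m, fun i => val Fin.elim0 (q2 i), ren φ f, Good.ren _ _ hφ, fun x => ?_⟩
  have := e (Fin.snoc Fin.elim0 x)
  rw [← hf, ← eval_ren] at this
  rw [← this]
  rfl

theorem Dl.extract2 (a : X) {P : X → X → Prop}
    (h : Dl E C (fun v : Fin 2 → X => P (v 0) (v 1))) :
    ∃ (k : ℕ) (p : Fin k → X) (φ : SF (k + 2)), C _ φ ∧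
      ∀ x y, P x y ↔ φ.Eval E (Fin.snoc (Fin.snoc p x) y) := by
  obtain ⟨m, q, φ, hφ, e⟩ := h
  obtain ⟨q2, f, hf⟩ := core q (Sum.inr a)
  obtain ⟨q3, f3, hf3⟩ := core q2 (Sum.inr a)
  refine ⟨m, fun i => val Fin.elim0 (q3 i), ren (ren φ f) (lift f3),
    Good.ren _ _ (Good.ren _ _ hφ), fun x y => ?_⟩
  have := e (Fin.snoc (Fin.snoc Fin.elim0 x) y)
  rw [← hf, ← hf3, ← eval_ren] at this
  rw [eval_ren, snoc_lift, ← this]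
  rfl

end closure

section model
set_option linter.unusedSectionVars false
set_option linter.unreachableTactic false
set_option linter.unusedTactic false
variable {E : X → X → Prop}

/-- Bounded formulas with subset quantifiers become `Δ₀` once a bounding set is fixed. -/
theorem bounded (hM : ModelM E) {n : ℕ} (φ : SF n) (hφ : φ.IsDelta0P) : ∀ a : X,
    ∃ P : (Fin n → X) → Prop, Dl E Delta0C P ∧
      ∀ v, (∀ i, E (v i) a) → (P v ↔ φ.Eval E v) := by
  obtain ⟨⟨hext, hemp, hpair, hun, hdiff, htco, hinf, hsep, hfd⟩, hpow⟩ := hM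
  have hbig : ∀ a, ∃ b c, (∀ z, E z a → E z b) ∧ (∀ y z, E y a → E z y → E z b) ∧
      (∀ y z, E y a → SubE E z y → E z b) ∧ (∀ y z, E y a → SubE E z y → E z c) ∧
      (∀ z, E z c → E z b) := by
    intro a
    obtain ⟨u, hu⟩ := hun a
    obtain ⟨c, hc⟩ := hpow u
    obtain ⟨d, hd⟩ := hpair a u
    obtain ⟨d', hd'⟩ := hpair d c
    obtain ⟨d2, hd2⟩ := hpair c c
    obtain ⟨e, he⟩ := hpair d d2
    obtain ⟨f, hf⟩ := hun e
    obtain ⟨b, hb⟩ := hun f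
    have hbb : ∀ z, E z b ↔ E z a ∨ E z u ∨ E z c := by
      intro z
      rw [hb]
      constructor
      · rintro ⟨y, hy, hz⟩
        obtain ⟨y', hy', hyy⟩ := (hf y).1 hy
        rcases (he _).1 hy' with rfl | rfl
        · rcases (hd _).1 hyy with rfl | rfl <;> tauto
        · rcases (hd2 _).1 hyy with rfl | rfl <;> tauto
      · rintro (h | h | h)
        · exact ⟨a, (hf _).2 ⟨d, (he _).2 (Or.inl rfl), (hd _).2 (Or.inl rfl)⟩, h⟩
        · exact ⟨u, (hf _).2 ⟨d, (he _).2 (Or.inl rfl), (hd _).2 (Or.inr rfl)⟩, h⟩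
        · exact ⟨c, (hf _).2 ⟨d2, (he _).2 (Or.inr rfl), (hd2 _).2 (Or.inr rfl)⟩, h⟩
    have hcc : ∀ y z, E y a → SubE E z y → E z c := fun y z hy hz =>
      (hc z).2 fun x hx => (hu x).2 ⟨y, hy, hz x hx⟩
    exact ⟨b, c, fun z hz => (hbb z).2 (Or.inl hz),
      fun y z hy hz => (hbb z).2 (Or.inr (Or.inl ((hu z).2 ⟨y, hy, hz⟩))),
      fun y z hy hz => (hbb z).2 (Or.inr (Or.inr (hcc y z hy hz))), hcc,
      fun z hz => (hbb z).2 (Or.inr (Or.inr hz))⟩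
  have hsnoc : ∀ {n : ℕ} (v : Fin n → X) (x b : X), (∀ i, E (v i) b) → E x b →
      ∀ i, E ((Fin.snoc v x : Fin (n + 1) → X) i) b := by
    intro n v x b h1 h2 i
    refine Fin.lastCases ?_ (fun j => ?_) i
    · simpa using h2
    · simpa using h1 j
  have hself : ∀ {n : ℕ} (v : Fin (n + 1) → X), Fin.snoc (Fin.init v) (v (Fin.last n)) = v :=
    fun v => Fin.snoc_init_self v
  induction φ with
  | mem i j => exact fun a => ⟨_, Dl.mem (Tm.var i) (Tm.var j), fun v _ => Iff.rfl⟩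
  | eq i j => exact fun a => ⟨_, Dl.eq (Tm.var i) (Tm.var j), fun v _ => Iff.rfl⟩
  | not φ ih =>
    intro a
    obtain ⟨P, hP, h⟩ := ih hφ a
    exact ⟨_, hP.not, fun v hv => not_congr (h v hv)⟩
  | and φ ψ ih1 ih2 =>
    intro a
    obtain ⟨P, hP, h⟩ := ih1 hφ.1 a
    obtain ⟨Q, hQ, h'⟩ := ih2 hφ.2 a
    exact ⟨_, hP.and hQ, fun v hv => and_congr (h v hv) (h' v hv)⟩
  | or φ ψ ih1 ih2 =>
    intro a
    obtain ⟨P, hP, h⟩ := ih1 hφ.1 a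
    obtain ⟨Q, hQ, h'⟩ := ih2 hφ.2 a
    exact ⟨_, hP.or hQ, fun v hv => or_congr (h v hv) (h' v hv)⟩
  | bexMem i φ ih =>
    intro a
    obtain ⟨b, c, h1, h2, h3, h4, h5⟩ := hbig a
    obtain ⟨P, hP, h⟩ := ih hφ b
    refine ⟨fun v => ∃ x, E x (v i) ∧ P (Fin.snoc v x), Dl.bexMem (Tm.var i) ?_, fun v hv => ?_⟩
    · simp only [hself]; exact hP
    · refine exists_congr fun x => and_congr_right fun hx => h _ ?_
      exact hsnoc _ _ _ (fun i => h1 _ (hv i)) (h2 _ _ (hv i) hx)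
  | ballMem i φ ih =>
    intro a
    obtain ⟨b, c, h1, h2, h3, h4, h5⟩ := hbig a
    obtain ⟨P, hP, h⟩ := ih hφ b
    refine ⟨fun v => ∀ x, E x (v i) → P (Fin.snoc v x), Dl.ballMem (Tm.var i) ?_, fun v hv => ?_⟩
    · simp only [hself]; exact hP
    · refine forall_congr' fun x => forall_congr' fun hx => h _ ?_
      exact hsnoc _ _ _ (fun i => h1 _ (hv i)) (h2 _ _ (hv i) hx)
  | bexSub i φ ih =>
    intro a
    obtain ⟨b, c, h1, h2, h3, h4, h5⟩ := hbig a
    obtain ⟨P, hP, h⟩ := ih hφ b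
    refine ⟨fun v => ∃ x, E x c ∧ (SubE E x (v i) ∧ P (Fin.snoc v x)),
      Dl.bexMem (Tm.const c) (Dl.and (Dl.sub (Tm.var _) (Tm.var i).init) ?_), fun v hv => ?_⟩
    · simp only [hself]; exact hP
    · have key : ∀ x, SubE E x (v i) → (P (Fin.snoc v x) ↔ φ.Eval E (Fin.snoc v x)) :=
        fun x hx => h _ (hsnoc _ _ _ (fun i => h1 _ (hv i)) (h3 _ _ (hv i) hx))
      constructor
      · rintro ⟨x, hx, hs, hp⟩
        exact ⟨x, hs, (key x hs).1 hp⟩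
      · rintro ⟨x, hs, hp⟩
        exact ⟨x, h4 _ _ (hv i) hs, hs, (key x hs).2 hp⟩
  | ballSub i φ ih =>
    intro a
    obtain ⟨b, c, h1, h2, h3, h4, h5⟩ := hbig a
    obtain ⟨P, hP, h⟩ := ih hφ b
    refine ⟨fun v => ∀ x, E x c → (SubE E x (v i) → P (Fin.snoc v x)),
      Dl.ballMem (Tm.const c) (Dl.imp (Dl.sub (Tm.var _) (Tm.var i).init) ?_), fun v hv => ?_⟩
    · simp only [hself]; exact hP
    · have key : ∀ x, SubE E x (v i) → (P (Fin.snoc v x) ↔ φ.Eval E (Fin.snoc v x)) :=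
        fun x hx => h _ (hsnoc _ _ _ (fun i => h1 _ (hv i)) (h3 _ _ (hv i) hx))
      constructor
      · intro H x hs
        exact (key x hs).1 (H x (h4 _ _ (hv i) hs) hs)
      · intro H x hx hs
        exact (key x hs).2 (H x hs)
  | ex φ ih => exact hφ.elim
  | all φ ih => exact hφ.elim

theorem union2 (hM : ModelM E) (a b : X) : ∃ c, ∀ z, E z c ↔ E z a ∨ E z b := by
  obtain ⟨⟨hext, hemp, hpair, hun, hdiff, htco, hinf, hsep, hfd⟩, hpow⟩ := hM
  obtain ⟨d, hd⟩ := hpair a b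
  obtain ⟨c, hc⟩ := hun d
  refine ⟨c, fun z => ?_⟩
  rw [hc]
  constructor
  · rintro ⟨y, hy, hz⟩
    rcases (hd y).1 hy with rfl | rfl
    · exact Or.inl hz
    · exact Or.inr hz
  · rintro (h | h)
    · exact ⟨a, (hd _).2 (Or.inl rfl), h⟩
    · exact ⟨b, (hd _).2 (Or.inr rfl), h⟩

theorem single (hM : ModelM E) (a : X) : ∃ c, ∀ z, E z c ↔ z = a := by
  obtain ⟨⟨hext, hemp, hpair, hun, hdiff, htco, hinf, hsep, hfd⟩, hpow⟩ := hM
  obtain ⟨d, hd⟩ := hpair a a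
  exact ⟨d, fun z => by rw [hd, or_self]⟩

/-- `Δ₀^𝒫`-Separation. -/
theorem sep (hM : ModelM E) {P : X → Prop}
    (h : Dl E Delta0PC (fun v : Fin 1 → X => P (v 0))) (w : X) :
    ∃ y, ∀ x, E x y ↔ (E x w ∧ P x) := by
  obtain ⟨m, q, φ, hφ, e⟩ := h
  have hfin : ∀ (k : ℕ) (q : Fin k → Fin 1 ⊕ X), ∃ a, (∀ z, E z w → E z a) ∧
      ∀ i c, q i = Sum.inr c → E c a := by
    intro k
    induction k with
    | zero => exact fun q => ⟨w, fun z hz => hz, fun i => i.elim0⟩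
    | succ k ih =>
      intro q
      obtain ⟨a, h1, h2⟩ := ih (fun i => q i.castSucc)
      rcases hq : q (Fin.last k) with j | c
      · refine ⟨a, h1, fun i c hc => ?_⟩
        revert hc
        refine Fin.lastCases ?_ (fun j => ?_) i
        · intro hc; rw [hq] at hc; cases hc
        · exact fun hc => h2 j c hc
      · obtain ⟨s, hs⟩ := single hM c
        obtain ⟨b, hb⟩ := union2 hM a s
        refine ⟨b, fun z hz => (hb z).2 (Or.inl (h1 z hz)), fun i c' hc => ?_⟩
        revert hc
        refine Fin.lastCases ?_ (fun j => ?_) i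
        · intro hc; rw [hq] at hc; cases hc; exact (hb _).2 (Or.inr ((hs _).2 rfl))
        · exact fun hc => (hb _).2 (Or.inl (h2 j c' hc))
  obtain ⟨a, ha1, ha2⟩ := hfin m q
  obtain ⟨Q, hQ, hQe⟩ := bounded hM φ hφ a
  have hQ1 : Dl E Delta0C (fun v : Fin 1 → X => (fun x : X => Q (fun i => val (fun _ => x) (q i))) (v 0)) := by
    refine (hQ.subst q).congr fun v => ?_
    have : (fun _ => v 0) = v := by
      funext i; rw [Subsingleton.elim i 0]
    simp only [this]
  obtain ⟨k, p, ψ, hψ, hψe⟩ := Dl.extract1 (P := fun x : X => Q (fun i => val (fun _ => x) (q i))) w hQ1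
  obtain ⟨y, hy⟩ := hM.1.2.2.2.2.2.2.2.1 k ψ hψ p w
  refine ⟨y, fun x => ?_⟩
  rw [hy, ← hψe]
  refine and_congr_right fun hx => ?_
  have := e (fun _ => x)
  refine Iff.trans (hQe _ fun i => ?_) this.symm
  rcases hq : q i with j | c
  · exact ha1 _ hx
  · exact ha2 i c hq

/-- `Δ₀^𝒫`-Collection. -/
theorem coll (hM : ModelKPP E) {P : X → X → Prop}
    (h : Dl E Delta0PC (fun v : Fin 2 → X => P (v 0) (v 1))) (w : X)
    (H : ∀ x, E x w → ∃ y, P x y) : ∃ c, ∀ x, E x w → ∃ y, E y c ∧ P x y := by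
  obtain ⟨k, p, φ, hφ, e⟩ := Dl.extract2 w h
  simp only [e] at H ⊢
  exact hM.2.1 k φ hφ p w H

/-- Set induction for `Σ₁^𝒫` properties, from `Π₁^𝒫`-Foundation. -/
theorem indS (hM : ModelKPP E) {P : X → X → Prop}
    (h : Dl E Delta0PC (fun v : Fin 2 → X => P (v 0) (v 1)))
    (H : ∀ x, (∀ y, E y x → ∃ z, P y z) → ∃ z, P x z) (x : X) : ∃ z, P x z := by
  by_contra hx
  obtain ⟨k, p, φ, hφ, e⟩ := Dl.extract2 (P := fun x y => ¬ P x y) x h.not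
  have e' : ∀ x, (SF.all φ).Eval E (Fin.snoc p x) ↔ ¬ ∃ z, P x z := by
    intro x
    simp only [SF.Eval, ← e, not_exists]
  obtain ⟨y, hy, hmin⟩ := hM.2.2 k (.all φ) ⟨φ, hφ, rfl⟩ p ⟨x, (e' x).2 hx⟩
  refine (e' y).1 hy (H y fun z hz => ?_)
  have := hmin z hz
  rw [e', not_not] at this
  exact this

/-- Minimal elements of nonempty definable subclasses of a set. -/
theorem minS (hM : ModelM E) {P : X → Prop}
    (h : Dl E Delta0PC (fun v : Fin 1 → X => P (v 0))) (w x : X) (hx : E x w) (hp : P x) :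
    ∃ y, E y w ∧ P y ∧ ∀ z, E z y → E z w → ¬ P z := by
  obtain ⟨b, hb⟩ := sep hM h w
  obtain ⟨y, hy, hm⟩ := hM.1.2.2.2.2.2.2.2.2 b ⟨x, (hb x).2 ⟨hx, hp⟩⟩
  exact ⟨y, ((hb y).1 hy).1, ((hb y).1 hy).2, fun z hz hzw hpz => hm z hz ((hb z).2 ⟨hzw, hpz⟩)⟩

theorem irrefl (hM : ModelM E) (a : X) : ¬ E a a := by
  intro ha
  obtain ⟨s, hs⟩ := single hM a
  obtain ⟨y, hy, hm⟩ := hM.1.2.2.2.2.2.2.2.2 s ⟨a, (hs a).2 rfl⟩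
  rw [hs] at hy
  subst hy
  exact hm y ha ((hs y).2 rfl)

theorem asymm2 (hM : ModelM E) (a b : X) (h : E a b) (h' : E b a) : False := by
  obtain ⟨s, hs⟩ := hM.1.2.2.1 a b
  obtain ⟨y, hy, hm⟩ := hM.1.2.2.2.2.2.2.2.2 s ⟨a, (hs a).2 (Or.inl rfl)⟩
  rcases (hs y).1 hy with rfl | rfl
  · exact hm b h' ((hs b).2 (Or.inr rfl))
  · exact hm a h ((hs a).2 (Or.inl rfl))

theorem ext (hM : ModelM E) (a b : X) (h : ∀ z, E z a ↔ E z b) : a = b := hM.1.1 a b h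

/-! ### Levels -/

/-- Histories in the sense of level theory. -/
def Hist (E : X → X → Prop) (h : X) : Prop :=
  ∀ x, E x h → ((∀ z, E z x → ∃ r, E r h ∧ (E r x ∧ SubE E z r)) ∧
    (∀ r, E r h → (E r x → ∀ z, SubE E z r → E z x)))

/-- Levels of the cumulative hierarchy. -/
def Lev (E : X → X → Prop) (s : X) : Prop :=
  ∃ h, SubE E h s ∧ (Hist E h ∧ ((∀ z, E z s → ∃ r, E r h ∧ SubE E z r) ∧
    (∀ r, E r h → ∀ z, SubE E z r → E z s)))

theorem Hist.dl {n : ℕ} {t : (Fin n → X) → X} (ht : Tm t) :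
    Dl E Delta0PC (fun v => Hist E (t v)) := by
  unfold Hist
  repeat' first
    | exact Tm.const _ | exact Tm.var _ | assumption | exact ht.init | exact ht.init2
    | exact ht.init3 | exact ht.init4 | apply Dl.sub | apply Dl.mem
    | apply Dl.and | apply Dl.ballSub | apply Dl.ballMem | apply Dl.bexSub | apply Dl.bexMem
    | apply Dl.imp

theorem Lev.dl {n : ℕ} {t : (Fin n → X) → X} (ht : Tm t) :
    Dl E Delta0PC (fun v => Lev E (t v)) := by
  unfold Lev
  repeat' first
    | exact Tm.const _ | exact Tm.var _ | assumption | exact ht.init | exact ht.init2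
    | exact ht.init3 | exact ht.init4 | apply Dl.sub | apply Dl.mem
    | apply Hist.dl
    | apply Dl.and | apply Dl.ballSub | apply Dl.ballMem | apply Dl.bexSub | apply Dl.bexMem
    | apply Dl.imp

theorem TransSet.dl {n : ℕ} {t : (Fin n → X) → X} (ht : Tm t) :
    Dl E Delta0PC (fun v => TransSet E (t v)) := by
  unfold TransSet
  repeat' first
    | exact Tm.const _ | exact Tm.var _ | assumption | exact ht.init | exact ht.init2
    | exact ht.init3 | exact ht.init4 | apply Dl.sub | apply Dl.mem
    | apply Dl.and | apply Dl.ballSub | apply Dl.ballMem | apply Dl.bexSub | apply Dl.bexMem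
    | apply Dl.imp

theorem Hist.trans (hM : ModelM E) {h x : X} (hh : Hist E h) (hx : E x h) : TransSet E x := by
  by_contra hc
  have hd : Dl E Delta0PC (fun v : Fin 1 → X => ¬ TransSet E (v 0)) :=
    (TransSet.dl (Tm.var 0)).not
  obtain ⟨y, hy, hny, hmin⟩ := minS hM (P := fun y => ¬ TransSet E y) hd h x hx hc
  refine hny fun z hz u hu => ?_
  obtain ⟨r, hr, hry, hzr⟩ := (hh y hy).1 z hz
  have hrt : TransSet E r := not_not.1 (hmin r hry hr)
  exact (hh y hy).2 r hr hry u (hrt u (hzr u hu))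

theorem Hist.lev (hM : ModelM E) {h x : X} (hh : Hist E h) (hx : E x h) : Lev E x := by
  have hd : Dl E Delta0PC (fun v : Fin 1 → X => E (v 0) h) := Dl.mem (Tm.var 0) (Tm.const h)
  obtain ⟨k, hk⟩ := sep hM (P := fun y => E y h) hd x
  refine ⟨k, fun z hz => ((hk z).1 hz).1, fun y hy => ⟨fun z hz => ?_, fun r hr hry => ?_⟩,
    fun z hz => ?_, fun r hr z hz => ?_⟩
  · obtain ⟨r, hr, hry, hzr⟩ := (hh y ((hk y).1 hy).2).1 z hz
    exact ⟨r, (hk r).2 ⟨hh.trans hM hx y ((hk y).1 hy).1 r hry, hr⟩, hry, hzr⟩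
  · exact (hh y ((hk y).1 hy).2).2 r ((hk r).1 hr).2 hry
  · obtain ⟨r, hr, hry, hzr⟩ := (hh x hx).1 z hz
    exact ⟨r, (hk r).2 ⟨hry, hr⟩, hzr⟩
  · exact (hh x hx).2 r ((hk r).1 hr).2 ((hk r).1 hr).1 z hz

theorem Lev.trans (hM : ModelM E) {s : X} (hs : Lev E s) : TransSet E s := by
  obtain ⟨h, hsub, hh, h1, h2⟩ := hs
  intro z hz u hu
  obtain ⟨r, hr, hzr⟩ := h1 z hz
  exact h2 r hr u (hh.trans hM hr u (hzr u hu))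

theorem Lev.pot {s : X} (hs : Lev E s) {z y : X} (hz : E z s) (hy : SubE E y z) : E y s := by
  obtain ⟨h, hsub, hh, h1, h2⟩ := hs
  obtain ⟨r, hr, hzr⟩ := h1 z hz
  exact h2 r hr y fun u hu => hzr u (hy u hu)

theorem Lev.below (hM : ModelM E) {s : X} (hs : Lev E s) {z : X} (hz : E z s) :
    ∃ r, E r s ∧ Lev E r ∧ SubE E z r := by
  obtain ⟨h, hsub, hh, h1, h2⟩ := hs
  obtain ⟨r, hr, hzr⟩ := h1 z hz
  exact ⟨r, hsub r hr, hh.lev hM hr, hzr⟩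

theorem Lev.comp (hM : ModelM E) {s t : X} (hs : Lev E s) (ht : Lev E t) :
    E s t ∨ s = t ∨ E t s := by
  by_contra hc
  obtain ⟨p, hp⟩ := hM.1.2.2.1 s t
  obtain ⟨a, hat, hpa⟩ := hM.1.2.2.2.2.2.1 p
  have hsa : E s a := hpa s ((hp s).2 (Or.inl rfl))
  have hta : E t a := hpa t ((hp t).2 (Or.inr rfl))
  have hd1 : Dl E Delta0PC (fun v : Fin 1 → X => Lev E (v 0) ∧ ∃ t, E t a ∧ (Lev E t ∧
      ¬ (E (v 0) t ∨ (v 0) = t ∨ E t (v 0)))) := by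
    repeat' first
      | exact Tm.const _ | exact Tm.var _ | apply Dl.sub
      | apply Dl.mem | apply Lev.dl | apply Dl.not | apply Dl.or | apply Dl.eq
      | apply Dl.and | apply Dl.ballSub | apply Dl.ballMem | apply Dl.bexSub | apply Dl.bexMem
      | apply Dl.imp
  obtain ⟨s, hsa, ⟨hs, t, hta, ht, hc⟩, hmin⟩ := minS hM (P := fun s => Lev E s ∧ ∃ t, E t a ∧
    (Lev E t ∧ ¬ (E s t ∨ s = t ∨ E t s))) hd1 a s hsa ⟨hs, t, hta, ht, hc⟩
  have hd2 : Dl E Delta0PC (fun v : Fin 1 → X => Lev E (v 0) ∧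
      ¬ (E s (v 0) ∨ s = (v 0) ∨ E (v 0) s)) := by
    repeat' first
      | exact Tm.const _ | exact Tm.var _ | apply Dl.sub
      | apply Dl.mem | apply Lev.dl | apply Dl.not | apply Dl.or | apply Dl.eq
      | apply Dl.and | apply Dl.ballSub | apply Dl.ballMem | apply Dl.bexSub | apply Dl.bexMem
      | apply Dl.imp
  obtain ⟨t, hta, ⟨ht, hc⟩, hmin2⟩ := minS hM (P := fun t => Lev E t ∧
    ¬ (E s t ∨ s = t ∨ E t s)) hd2 a t hta ⟨ht, hc⟩
  have h1 : ∀ z, E z s → E z t := by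
    intro z hz
    obtain ⟨r, hrs, hr, hzr⟩ := hs.below hM hz
    have : E r t ∨ r = t ∨ E t r := by
      by_contra hcon
      exact hmin r hrs (hat s hsa r hrs) ⟨hr, t, hta, ht, hcon⟩
    rcases this with h | rfl | h
    · exact ht.pot h hzr
    · exact (hc (Or.inr (Or.inr hrs))).elim
    · exact (hc (Or.inr (Or.inr (hs.trans hM r hrs t h)))).elim
  have h2 : ∀ z, E z t → E z s := by
    intro z hz
    obtain ⟨r, hrt, hr, hzr⟩ := ht.below hM hz
    have : E s r ∨ s = r ∨ E r s := by
      by_contra hcon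
      exact hmin2 r hrt (hat t hta r hrt) ⟨hr, hcon⟩
    rcases this with h | rfl | h
    · exact (hc (Or.inl (ht.trans hM r hrt s h))).elim
    · exact (hc (Or.inl hrt)).elim
    · exact hs.pot h hzr
  exact hc (Or.inr (Or.inl (ext hM s t fun z => ⟨h1 z, h2 z⟩)))

/-- A set of levels is included in a level. -/
theorem lev_above (hM : ModelM E) (c : X) : ∃ s, Lev E s ∧ ∀ r, E r c → Lev E r → E r s := by
  have hL : Dl E Delta0PC (fun v : Fin 1 → X => Lev E (v 0)) := Lev.dl (Tm.var 0)
  obtain ⟨c1, hc1⟩ := sep hM (P := fun x => Lev E x) hL c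
  obtain ⟨u, hu⟩ := hM.1.2.2.2.1 c1
  obtain ⟨d, hd⟩ := union2 hM c1 u
  obtain ⟨h, hh⟩ := sep hM (P := fun x => Lev E x) hL d
  obtain ⟨uh, huh⟩ := hM.1.2.2.2.1 h
  obtain ⟨p, hp⟩ := hM.2 uh
  have hD : Dl E Delta0PC (fun v : Fin 1 → X => ∃ r, E r h ∧ SubE E (v 0) r) :=
    Dl.bexMem (Tm.const h) (Dl.sub (Tm.var 0) (Tm.var _))
  obtain ⟨s, hs⟩ := sep hM (P := fun x => ∃ r, E r h ∧ SubE E x r) hD p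
  have hs' : ∀ x, E x s ↔ ∃ r, E r h ∧ SubE E x r := by
    intro x
    rw [hs]
    refine ⟨fun h => h.2, fun hx => ⟨?_, hx⟩⟩
    obtain ⟨r, hr, hxr⟩ := hx
    exact (hp x).2 fun z hz => (huh z).2 ⟨r, hr, hxr z hz⟩
  refine ⟨s, ⟨h, fun r hr => (hs' r).2 ⟨r, hr, fun z hz => hz⟩, ?_, fun z hz => (hs' z).1 hz,
    fun r hr z hz => (hs' z).2 ⟨r, hr, hz⟩⟩, fun r hr hlr => ?_⟩
  · intro x hx
    have hlx := ((hh x).1 hx).2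
    refine ⟨fun z hz => ?_, fun r hr hrx z hz => hlx.pot hrx hz⟩
    obtain ⟨r, hrx, hr, hzr⟩ := hlx.below hM hz
    refine ⟨r, (hh r).2 ⟨(hd r).2 (Or.inr ((hu r).2 ?_)), hr⟩, hrx, hzr⟩
    rcases (hd x).1 ((hh x).1 hx).1 with h1 | h1
    · exact ⟨x, h1, hrx⟩
    · obtain ⟨y, hy, hxy⟩ := (hu x).1 h1
      exact ⟨y, hy, ((hc1 y).1 hy).2.trans hM x hxy r hrx⟩
  · exact (hs' r).2 ⟨r, (hh r).2 ⟨(hd r).2 (Or.inl ((hc1 r).2 ⟨hr, hlr⟩)), hlr⟩, fun z hz => hz⟩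

/-- Every set is included in a level. -/
theorem lev_all (hM : ModelKPP E) (x : X) : ∃ s, Lev E s ∧ SubE E x s := by
  have hD : Dl E Delta0PC (fun v : Fin 2 → X => Lev E (v 1) ∧ SubE E (v 0) (v 1)) :=
    (Lev.dl (Tm.var 1)).and (Dl.sub (Tm.var 0) (Tm.var 1))
  refine indS hM (P := fun x s => Lev E s ∧ SubE E x s) hD (fun x hx => ?_) x
  obtain ⟨c, hc⟩ := coll hM (P := fun x s => Lev E s ∧ SubE E x s) hD x hx
  obtain ⟨s, hs, hcs⟩ := lev_above hM.1 c
  refine ⟨s, hs, fun y hy => ?_⟩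
  obtain ⟨r, hr, hlr, hyr⟩ := hc y hy
  exact hs.pot (hcs r hr hlr) hyr

/-! ### Predicates used in the iteration -/

def Q (E : X → X → Prop) (q n s : X) : Prop :=
  (∀ z, E z q → (E z n ∨ z = s)) ∧ ((∀ z, E z n → E z q) ∧ E s q)

theorem Q.dl {k : ℕ} {t0 : (Fin k → X) → X} {t1 : (Fin k → X) → X} {t2 : (Fin k → X) → X} (h0 : Tm t0) (h1 : Tm t1) (h2 : Tm t2) :
    Dl E Delta0PC (fun v => Q E (t0 v) (t1 v) (t2 v)) := by
  unfold Q
  repeat' first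
    | exact Tm.const _ | exact Tm.var _ | assumption
    | (refine Tm.init ?_; assumption) | (refine Tm.init2 ?_; assumption)
    | (refine Tm.init3 ?_; assumption) | (refine Tm.init4 ?_; assumption)
    | apply Dl.sub | apply Dl.mem | apply Lev.dl | apply Dl.eq
    | apply Dl.not | apply Dl.or | apply Dl.and | apply Dl.ballSub | apply Dl.ballMem
    | apply Dl.bexSub | apply Dl.bexMem | apply Dl.imp

def S (E : X → X → Prop) (R : X → X → Prop) (t : X) (r s : X) : Prop :=
  Lev E s ∧ (E r s ∧ ∀ x, E x t → ((∃ y, E y r ∧ R x y) → ∃ x', E x' x ∧ ∃ y, E y s ∧ R x' y))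

theorem S.dl {R : X → X → Prop} (hR : ∀ {k : ℕ} {t0 t1 : (Fin k → X) → X}, Tm t0 → Tm t1 →
    Dl E Delta0PC (fun v => R (t0 v) (t1 v))) (t : X) {k : ℕ} {t0 : (Fin k → X) → X} {t1 : (Fin k → X) → X} (h0 : Tm t0) (h1 : Tm t1) :
    Dl E Delta0PC (fun v => S E R t (t0 v) (t1 v)) := by
  unfold S
  repeat' first
    | exact Tm.const _ | exact Tm.var _ | assumption
    | (refine Tm.init ?_; assumption) | (refine Tm.init2 ?_; assumption)
    | (refine Tm.init3 ?_; assumption) | (refine Tm.init4 ?_; assumption)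
    | apply Dl.sub | apply Dl.mem | apply Lev.dl | apply Dl.eq
    | apply hR
    | apply Dl.not | apply Dl.or | apply Dl.and | apply Dl.ballSub | apply Dl.ballMem
    | apply Dl.bexSub | apply Dl.bexMem | apply Dl.imp

def L (E : X → X → Prop) (R : X → X → Prop) (t : X) (r s : X) : Prop :=
  S E R t r s ∧ ∀ s', E s' s → ¬ S E R t r s'

theorem L.dl {R : X → X → Prop} (hR : ∀ {k : ℕ} {t0 t1 : (Fin k → X) → X}, Tm t0 → Tm t1 →
    Dl E Delta0PC (fun v => R (t0 v) (t1 v))) (t : X) {k : ℕ} {t0 : (Fin k → X) → X} {t1 : (Fin k → X) → X} (h0 : Tm t0) (h1 : Tm t1) :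
    Dl E Delta0PC (fun v => L E R t (t0 v) (t1 v)) := by
  unfold L
  repeat' first
    | exact Tm.const _ | exact Tm.var _ | assumption
    | (refine Tm.init ?_; assumption) | (refine Tm.init2 ?_; assumption)
    | (refine Tm.init3 ?_; assumption) | (refine Tm.init4 ?_; assumption)
    | apply Dl.sub | apply Dl.mem | apply Lev.dl | apply Dl.eq
    | apply S.dl hR
    | apply Dl.not | apply Dl.or | apply Dl.and | apply Dl.ballSub | apply Dl.ballMem
    | apply Dl.bexSub | apply Dl.bexMem | apply Dl.imp

def Sc (E : X → X → Prop) (m n : X) : Prop :=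
  (∀ z, E z n → (E z m ∨ z = m)) ∧ ((∀ z, E z m → E z n) ∧ E m n)

theorem Sc.dl {k : ℕ} {t0 : (Fin k → X) → X} {t1 : (Fin k → X) → X} (h0 : Tm t0) (h1 : Tm t1) :
    Dl E Delta0PC (fun v => Sc E (t0 v) (t1 v)) := by
  unfold Sc
  repeat' first
    | exact Tm.const _ | exact Tm.var _ | assumption
    | (refine Tm.init ?_; assumption) | (refine Tm.init2 ?_; assumption)
    | (refine Tm.init3 ?_; assumption) | (refine Tm.init4 ?_; assumption)
    | apply Dl.sub | apply Dl.mem | apply Lev.dl | apply Dl.eq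
    | apply Dl.not | apply Dl.or | apply Dl.and | apply Dl.ballSub | apply Dl.ballMem
    | apply Dl.bexSub | apply Dl.bexMem | apply Dl.imp

def Emp (E : X → X → Prop) (n : X) : Prop :=
  ∀ z, E z n → ¬ E z n

theorem Emp.dl {k : ℕ} {t0 : (Fin k → X) → X} (h0 : Tm t0) :
    Dl E Delta0PC (fun v => Emp E (t0 v)) := by
  unfold Emp
  repeat' first
    | exact Tm.const _ | exact Tm.var _ | assumption
    | (refine Tm.init ?_; assumption) | (refine Tm.init2 ?_; assumption)
    | (refine Tm.init3 ?_; assumption) | (refine Tm.init4 ?_; assumption)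
    | apply Dl.sub | apply Dl.mem | apply Lev.dl | apply Dl.eq
    | apply Dl.not | apply Dl.or | apply Dl.and | apply Dl.ballSub | apply Dl.ballMem
    | apply Dl.bexSub | apply Dl.bexMem | apply Dl.imp

def G (E : X → X → Prop) (r0 : X) (s : X) : Prop :=
  Lev E s ∧ (s = r0 ∨ E r0 s)

theorem G.dl (r0 : X) {k : ℕ} {t0 : (Fin k → X) → X} (h0 : Tm t0) :
    Dl E Delta0PC (fun v => G E r0 (t0 v)) := by
  unfold G
  repeat' first
    | exact Tm.const _ | exact Tm.var _ | assumption
    | (refine Tm.init ?_; assumption) | (refine Tm.init2 ?_; assumption)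
    | (refine Tm.init3 ?_; assumption) | (refine Tm.init4 ?_; assumption)
    | apply Dl.sub | apply Dl.mem | apply Lev.dl | apply Dl.eq
    | apply Dl.not | apply Dl.or | apply Dl.and | apply Dl.ballSub | apply Dl.ballMem
    | apply Dl.bexSub | apply Dl.bexMem | apply Dl.imp

def Ind (E : X → X → Prop) (b : X) : Prop :=
  (∃ e, E e b ∧ Emp E e) ∧ ∀ x, E x b → ∃ s, E s b ∧ Sc E x s

theorem Ind.dl {k : ℕ} {t0 : (Fin k → X) → X} (h0 : Tm t0) :
    Dl E Delta0PC (fun v => Ind E (t0 v)) := by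
  unfold Ind
  repeat' first
    | exact Tm.const _ | exact Tm.var _ | assumption
    | (refine Tm.init ?_; assumption) | (refine Tm.init2 ?_; assumption)
    | (refine Tm.init3 ?_; assumption) | (refine Tm.init4 ?_; assumption)
    | apply Dl.sub | apply Dl.mem | apply Lev.dl | apply Dl.eq
    | apply Emp.dl | apply Sc.dl
    | apply Dl.not | apply Dl.or | apply Dl.and | apply Dl.ballSub | apply Dl.ballMem
    | apply Dl.bexSub | apply Dl.bexMem | apply Dl.imp

def Att (E : X → X → Prop) (R : X → X → Prop) (t w r0 : X) (f : X) : Prop :=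
  ∀ q, E q f → ∃ n, E n w ∧ ∃ s, E s q ∧ (Q E q n s ∧ (G E r0 s ∧ ((Emp E n ∧ s = r0) ∨
    ∃ q', E q' f ∧ ∃ m, E m w ∧ ∃ s', E s' q' ∧
      (Q E q' m s' ∧ (G E r0 s' ∧ (Sc E m n ∧ L E R t s' s))))))

theorem Att.dl {R : X → X → Prop} (hR : ∀ {k : ℕ} {t0 t1 : (Fin k → X) → X}, Tm t0 → Tm t1 →
    Dl E Delta0PC (fun v => R (t0 v) (t1 v))) (t w r0 : X) {k : ℕ} {t0 : (Fin k → X) → X} (h0 : Tm t0) :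
    Dl E Delta0PC (fun v => Att E R t w r0 (t0 v)) := by
  unfold Att
  repeat' first
    | exact Tm.const _ | exact Tm.var _ | assumption
    | (refine Tm.init ?_; assumption) | (refine Tm.init2 ?_; assumption)
    | (refine Tm.init3 ?_; assumption) | (refine Tm.init4 ?_; assumption)
    | apply Dl.sub | apply Dl.mem | apply Lev.dl | apply Dl.eq
    | apply Q.dl | apply Emp.dl | apply Sc.dl | apply G.dl | apply L.dl hR
    | apply Dl.not | apply Dl.or | apply Dl.and | apply Dl.ballSub | apply Dl.ballMem
    | apply Dl.bexSub | apply Dl.bexMem | apply Dl.imp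


theorem exists_omega (hM : ModelM E) : ∃ w, Ind E w ∧
    ∀ n, E n w → Emp E n ∨ ∃ m, E m w ∧ Sc E m n := by
  obtain ⟨a, ⟨e, hea, hee⟩, hsa⟩ := hM.1.2.2.2.2.2.2.1
  have hsa' : ∀ x, E x a → ∃ s, E s a ∧ Sc E x s := by
    intro x hx
    obtain ⟨s, hs, hss⟩ := hsa x hx
    exact ⟨s, hs, fun z hz => (hss z).1 hz, fun z hz => (hss z).2 (Or.inl hz),
      (hss x).2 (Or.inr rfl)⟩
  have hD : Dl E Delta0PC (fun v : Fin 1 → X => ∀ b, SubE E b a → (Ind E b → E (v 0) b)) := by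
    repeat' first
      | exact Tm.const _ | exact Tm.var _ | assumption
      | (refine Tm.init ?_; assumption) | (refine Tm.init2 ?_; assumption)
      | (refine Tm.init3 ?_; assumption) | (refine Tm.init4 ?_; assumption)
      | apply Dl.sub | apply Dl.mem | apply Lev.dl | apply Dl.eq
      | apply Ind.dl
      | apply Dl.not | apply Dl.or | apply Dl.and | apply Dl.ballSub | apply Dl.ballMem
      | apply Dl.bexSub | apply Dl.bexMem | apply Dl.imp
  obtain ⟨w, hw⟩ := sep hM (P := fun n => ∀ b, SubE E b a → (Ind E b → E n b)) hD a
  have hI : Ind E w := by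
    refine ⟨⟨e, (hw e).2 ⟨hea, fun b hb hIb => ?_⟩, fun z hz => (hee z hz).elim⟩, fun x hx => ?_⟩
    · obtain ⟨e', he', hem⟩ := hIb.1
      have : e = e' := ext hM _ _ fun z => ⟨fun h => (hee z h).elim, fun h => (hem z h h).elim⟩
      rw [this]; exact he'
    · obtain ⟨s, hs, hss⟩ := hsa' x ((hw x).1 hx).1
      refine ⟨s, (hw s).2 ⟨hs, fun b hb hIb => ?_⟩, hss⟩
      obtain ⟨s', hs', hss'⟩ := hIb.2 x (((hw x).1 hx).2 b hb hIb)
      have : s = s' := by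
        refine ext hM _ _ fun z => ⟨fun h => ?_, fun h => ?_⟩
        · rcases hss.1 z h with h | rfl
          · exact hss'.2.1 z h
          · exact hss'.2.2
        · rcases hss'.1 z h with h | rfl
          · exact hss.2.1 z h
          · exact hss.2.2
      rw [this]; exact hs'
  refine ⟨w, hI, fun n hn => ?_⟩
  by_contra hc
  push Not at hc
  have hD2 : Dl E Delta0PC (fun v : Fin 1 → X => ¬ (v 0 = n)) :=
    (Dl.eq (Tm.var 0) (Tm.const n)).not
  obtain ⟨b, hb⟩ := sep hM (P := fun x => ¬ (x = n)) hD2 w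
  have hnb := ((hw n).1 hn).2 b (fun z hz => ((hw z).1 ((hb z).1 hz).1).1) ?_
  · exact ((hb n).1 hnb).2 rfl
  · obtain ⟨⟨e, he, hee⟩, hs⟩ := hI
    refine ⟨⟨e, (hb e).2 ⟨he, fun h => hc.1 (h ▸ hee)⟩, hee⟩, fun x hx => ?_⟩
    obtain ⟨s, hsw, hss⟩ := hs x ((hb x).1 hx).1
    exact ⟨s, (hb s).2 ⟨hsw, fun h => hc.2 x ((hb x).1 hx).1 (h ▸ hss)⟩, hss⟩

theorem Sc.inj (hM : ModelM E) {m m' n : X} (h : Sc E m n) (h' : Sc E m' n) : m = m' := by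
  rcases h'.1 m h.2.2 with h1 | h1
  · rcases h.1 m' h'.2.2 with h2 | h2
    · exact (asymm2 hM _ _ h1 h2).elim
    · exact h2.symm
  · exact h1

theorem exists_L (hM : ModelKPP E) {R : X → X → Prop} (hR : ∀ {k : ℕ} {t0 t1 : (Fin k → X) → X}, Tm t0 → Tm t1 →
    Dl E Delta0PC (fun v => R (t0 v) (t1 v))) (t : X)
    (hno : ∀ x, (∃ y, R x y) → ∃ x', E x' x ∧ ∃ y, R x' y) (r : X) : ∃ s, L E R t r s := by
  have hS : ∃ s, S E R t r s := by
    have hD : Dl E Delta0PC (fun v : Fin 2 → X => (∃ y, E y r ∧ R (v 0) y) →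
        ∃ x', E x' (v 0) ∧ R x' (v 1)) := by
      repeat' first
        | exact Tm.const _ | exact Tm.var _ | assumption
        | (refine Tm.init ?_; assumption) | (refine Tm.init2 ?_; assumption)
        | (refine Tm.init3 ?_; assumption) | (refine Tm.init4 ?_; assumption)
        | apply Dl.sub | apply Dl.mem | apply Lev.dl | apply Dl.eq
        | apply hR
        | apply Dl.not | apply Dl.or | apply Dl.and | apply Dl.ballSub | apply Dl.ballMem
        | apply Dl.bexSub | apply Dl.bexMem | apply Dl.imp
    obtain ⟨c, hc⟩ := coll hM (P := fun x z => (∃ y, E y r ∧ R x y) → ∃ x', E x' x ∧ R x' z) hD t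
      (by
        intro x _
        by_cases h : ∃ y, E y r ∧ R x y
        · obtain ⟨y, _, hy⟩ := h
          obtain ⟨x', hx', z, hz⟩ := hno x ⟨y, hy⟩
          exact ⟨z, fun _ => ⟨x', hx', hz⟩⟩
        · exact ⟨x, fun h' => (h h').elim⟩)
    obtain ⟨sr, hsr⟩ := single hM.1 r
    obtain ⟨d, hd⟩ := union2 hM.1 c sr
    obtain ⟨s, hs, hds⟩ := lev_all hM d
    refine ⟨s, hs, hds r ((hd r).2 (Or.inr ((hsr r).2 rfl))), fun x hx hy => ?_⟩
    obtain ⟨z, hz, h⟩ := hc x hx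
    obtain ⟨x', hx', hR'⟩ := h hy
    exact ⟨x', hx', z, hds z ((hd z).2 (Or.inl hz)), hR'⟩
  obtain ⟨s, hs⟩ := hS
  by_cases h : ∃ s', E s' s ∧ S E R t r s'
  · obtain ⟨s', hs's, hs'⟩ := h
    have hD : Dl E Delta0PC (fun v : Fin 1 → X => S E R t r (v 0)) :=
      S.dl hR t (Tm.const r) (Tm.var 0)
    obtain ⟨y, hy, hyS, hmin⟩ := minS hM.1 (P := fun s => S E R t r s) hD s s' hs's hs'
    exact ⟨y, hyS, fun z hz => hmin z hz (hs.1.trans hM.1 y hy z hz)⟩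
  · exact ⟨s, hs, fun s' hs' hS => h ⟨s', hs', hS⟩⟩

theorem L.uniq (hM : ModelM E) {R : X → X → Prop} {t r s s' : X} (h : L E R t r s)
    (h' : L E R t r s') : s = s' := by
  rcases h.1.1.comp hM h'.1.1 with h1 | h1 | h1
  · exact (h'.2 s h1 h.1).elim
  · exact h1
  · exact (h.2 s' h1 h'.1).elim

section iter
variable {w r0 : X}

theorem G.notin (hM : ModelM E) (hw : E w r0) (hr0 : Lev E r0) {n s : X} (hn : E n w)
    (hs : G E r0 s) : ¬ E s n := by
  intro hsn
  have h1 : E s r0 := hr0.trans hM n (hr0.trans hM w hw n hn) s hsn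
  rcases hs.2 with rfl | h
  · exact irrefl hM _ h1
  · exact asymm2 hM _ _ h h1

theorem Q.inj (hM : ModelM E) (hw : E w r0) (hr0 : Lev E r0) {q n s n' s' : X} (hn : E n w)
    (hn' : E n' w) (hs : G E r0 s) (hs' : G E r0 s') (h : Q E q n s) (h' : Q E q n' s') :
    n = n' ∧ s = s' := by
  have e : s = s' := by
    rcases h'.1 s h.2.2 with h1 | h1
    · exact (G.notin hM hw hr0 hn' hs h1).elim
    · exact h1
  refine ⟨ext hM _ _ fun z => ⟨fun hz => ?_, fun hz => ?_⟩, e⟩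
  · rcases h'.1 z (h.2.1 z hz) with h1 | h1
    · exact h1
    · exact (G.notin hM hw hr0 hn hs' (h1 ▸ hz)).elim
  · rcases h.1 z (h'.2.1 z hz) with h1 | h1
    · exact h1
    · exact (G.notin hM hw hr0 hn' hs (h1 ▸ hz)).elim

theorem Att.inv (hM : ModelM E) (hw : E w r0) (hr0 : Lev E r0) {R : X → X → Prop} {t f q n s : X}
    (hf : Att E R t w r0 f) (hq : E q f) (hn : E n w) (hQ : Q E q n s) (hs : G E r0 s) :
    (Emp E n ∧ s = r0) ∨ ∃ q' m s', E q' f ∧ E m w ∧ Q E q' m s' ∧ G E r0 s' ∧ Sc E m n ∧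
      L E R t s' s := by
  obtain ⟨n1, hn1, s1, hs1, hQ1, hG1, h⟩ := hf q hq
  obtain ⟨rfl, rfl⟩ := Q.inj hM hw hr0 hn hn1 hs hG1 hQ hQ1
  rcases h with h | ⟨q', hq', m, hm, s', hs', h1, h2, h3, h4⟩
  · exact Or.inl h
  · exact Or.inr ⟨q', m, s', hq', hm, h1, h2, h3, h4⟩

theorem Att.uniq (hM : ModelM E) (hw : E w r0) (hr0 : Lev E r0) {R : X → X → Prop}
    {t f f' : X} (hf : Att E R t w r0 f) (hf' : Att E R t w r0 f') {n q s q' s' : X} (hn : E n w)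
    (hq : E q f) (hQ : Q E q n s) (hs : G E r0 s)
    (hq' : E q' f') (hQ' : Q E q' n s') (hs' : G E r0 s') : s = s' := by
  by_contra hc
  have hD : Dl E Delta0PC (fun v : Fin 1 → X => ∃ q, E q f ∧ ∃ s, E s q ∧ ∃ q', E q' f' ∧
      ∃ s', E s' q' ∧ ((Q E q (v 0) s ∧ G E r0 s) ∧ ((Q E q' (v 0) s' ∧ G E r0 s') ∧
        ¬ (s = s')))) := by
    repeat' first
      | exact Tm.const _ | exact Tm.var _ | assumption
      | (refine Tm.init ?_; assumption) | (refine Tm.init2 ?_; assumption)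
      | (refine Tm.init3 ?_; assumption) | (refine Tm.init4 ?_; assumption)
      | apply Dl.sub | apply Dl.mem | apply Lev.dl | apply Dl.eq
      | apply Q.dl | apply G.dl
      | apply Dl.not | apply Dl.or | apply Dl.and | apply Dl.ballSub | apply Dl.ballMem
      | apply Dl.bexSub | apply Dl.bexMem | apply Dl.imp
  obtain ⟨n, hn, ⟨q, hq, s, -, q', hq', s', -, ⟨hQ, hs⟩, ⟨hQ', hs'⟩, hc⟩, hmin⟩ := minS hM
    (P := fun n => ∃ q, E q f ∧ ∃ s, E s q ∧ ∃ q', E q' f' ∧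
      ∃ s', E s' q' ∧ ((Q E q n s ∧ G E r0 s) ∧ ((Q E q' n s' ∧ G E r0 s') ∧
        ¬ (s = s')))) hD w n hn
    ⟨q, hq, s, hQ.2.2, q', hq', s', hQ'.2.2, ⟨hQ, hs⟩, ⟨hQ', hs'⟩, hc⟩
  rcases hf.inv hM hw hr0 hq hn hQ hs with ⟨he, h1⟩ | ⟨p, m, u, hp, hm, hQm, hGm, hsc, hL⟩
  · rcases hf'.inv hM hw hr0 hq' hn hQ' hs' with ⟨_, h2⟩ | ⟨p', m', u', _, _, _, _, hsc', _⟩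
    · exact hc (h1.trans h2.symm)
    · exact he m' hsc'.2.2 hsc'.2.2
  · rcases hf'.inv hM hw hr0 hq' hn hQ' hs' with
      ⟨he, h2⟩ | ⟨p', m', u', hp', hm', hQm', hGm', hsc', hL'⟩
    · exact he m hsc.2.2 hsc.2.2
    · obtain rfl := hsc.inj hM hsc'
      have hu : u = u' := by
        by_contra hne
        exact hmin m hsc.2.2 hm ⟨p, hp, u, hQm.2.2, p', hp', u', hQm'.2.2, ⟨hQm, hGm⟩,
          ⟨hQm', hGm'⟩, hne⟩
      subst hu
      exact hc (hL.uniq hM hL')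

theorem exists_Q (hM : ModelM E) (n s : X) : ∃ q, Q E q n s := by
  obtain ⟨d, hd⟩ := single hM s
  obtain ⟨q, hq⟩ := union2 hM n d
  exact ⟨q, fun z hz => ((hq z).1 hz).imp id (hd z).1, fun z hz => (hq z).2 (Or.inl hz),
    (hq s).2 (Or.inr ((hd s).2 rfl))⟩

end iter

theorem main (hM : ModelKPP E) {R : X → X → Prop} (hR : ∀ {k : ℕ} {t0 t1 : (Fin k → X) → X}, Tm t0 → Tm t1 →
    Dl E Delta0PC (fun v => R (t0 v) (t1 v))) 
    (hno : ∀ x, (∃ y, R x y) → ∃ x', E x' x ∧ ∃ y, R x' y) (x0 y0 : X) (h0 : R x0 y0) : False := by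
  obtain ⟨w, hI, hpred⟩ := exists_omega hM.1
  obtain ⟨sx, hsx⟩ := single hM.1 x0
  obtain ⟨t, htt, hxt⟩ := hM.1.1.2.2.2.2.2.1 sx
  have hx0 : E x0 t := hxt x0 ((hsx x0).2 rfl)
  obtain ⟨d, hd⟩ := hM.1.1.2.2.1 w y0
  obtain ⟨r0, hr0, hdr⟩ := lev_all hM d
  have hw : E w r0 := hdr w ((hd w).2 (Or.inl rfl))
  have hy0 : E y0 r0 := hdr y0 ((hd y0).2 (Or.inr rfl))
  have hGr : G E r0 r0 := ⟨hr0, Or.inl rfl⟩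
  have hD : Dl E Delta0PC (fun v : Fin 2 → X => E (v 0) w → (Att E R t w r0 (v 1) ∧
      ∃ q, E q (v 1) ∧ ∃ s, E s q ∧ (Q E q (v 0) s ∧ G E r0 s))) := by
    repeat' first
      | exact Tm.const _ | exact Tm.var _ | assumption
      | (refine Tm.init ?_; assumption) | (refine Tm.init2 ?_; assumption)
      | (refine Tm.init3 ?_; assumption) | (refine Tm.init4 ?_; assumption)
      | apply Dl.sub | apply Dl.mem | apply Lev.dl | apply Dl.eq
      | apply Q.dl | apply G.dl | apply Att.dl hR
      | apply Dl.not | apply Dl.or | apply Dl.and | apply Dl.ballSub | apply Dl.ballMem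
      | apply Dl.bexSub | apply Dl.bexMem | apply Dl.imp
  have hex : ∀ n, ∃ f, E n w → (Att E R t w r0 f ∧
      ∃ q, E q f ∧ ∃ s, E s q ∧ (Q E q n s ∧ G E r0 s)) := by
    refine indS hM (P := fun n f => E n w → (Att E R t w r0 f ∧
      ∃ q, E q f ∧ ∃ s, E s q ∧ (Q E q n s ∧ G E r0 s))) hD (fun n ih => ?_)
    by_cases hn : E n w
    · rcases hpred n hn with he | ⟨m, hm, hsc⟩
      · obtain ⟨q, hq⟩ := exists_Q hM.1 n r0
        obtain ⟨f, hf⟩ := single hM.1 q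
        refine ⟨f, fun _ => ⟨fun q' hq' => ?_, q, (hf q).2 rfl, r0, hq.2.2, hq, hGr⟩⟩
        obtain rfl := (hf q').1 hq'
        exact ⟨n, hn, r0, hq.2.2, hq, hGr, Or.inl ⟨he, rfl⟩⟩
      · obtain ⟨f, hf⟩ := ih m hsc.2.2
        obtain ⟨hA, q, hq, s, hs, hQ, hG⟩ := hf hm
        obtain ⟨s', hL⟩ := exists_L hM hR t hno s
        obtain ⟨q', hQ'⟩ := exists_Q hM.1 n s'
        obtain ⟨g, hg⟩ := single hM.1 q'
        obtain ⟨f', hf'⟩ := union2 hM.1 f g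
        have hq'f : E q' f' := (hf' q').2 (Or.inr ((hg q').2 rfl))
        have hG' : G E r0 s' := by
          refine ⟨hL.1.1, Or.inr ?_⟩
          rcases hG.2 with rfl | h
          · exact hL.1.2.1
          · exact hL.1.1.trans hM.1 s hL.1.2.1 r0 h
        refine ⟨f', fun _ => ⟨fun p hp => ?_, q', hq'f, s', hQ'.2.2, hQ', hG'⟩⟩
        rcases (hf' p).1 hp with hp | hp
        · obtain ⟨a, ha, b, hb, h1, h2, h3⟩ := hA p hp
          refine ⟨a, ha, b, hb, h1, h2, h3.imp id ?_⟩
          rintro ⟨p', hp', h4⟩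
          exact ⟨p', (hf' p').2 (Or.inl hp'), h4⟩
        · obtain rfl := (hg p).1 hp
          exact ⟨n, hn, s', hQ'.2.2, hQ', hG', Or.inr ⟨q, (hf' q).2 (Or.inl hq), m, hm, s, hs, hQ,
            hG, hsc, hL⟩⟩
    · exact ⟨n, fun h => (hn h).elim⟩
  obtain ⟨c, hc⟩ := coll hM (P := fun n f => E n w → (Att E R t w r0 f ∧
      ∃ q, E q f ∧ ∃ s, E s q ∧ (Q E q n s ∧ G E r0 s))) hD w (fun n _ => hex n)
  have hD2 : Dl E Delta0PC (fun v : Fin 1 → X => ∃ f, E f c ∧ (Att E R t w r0 f ∧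
      ∃ q, E q f ∧ ∃ n, E n w ∧ ∃ s, E s q ∧ ((Q E q n s ∧ G E r0 s) ∧
        ∃ y, E y s ∧ R (v 0) y))) := by
    repeat' first
      | exact Tm.const _ | exact Tm.var _ | assumption
      | (refine Tm.init ?_; assumption) | (refine Tm.init2 ?_; assumption)
      | (refine Tm.init3 ?_; assumption) | (refine Tm.init4 ?_; assumption)
      | apply Dl.sub | apply Dl.mem | apply Lev.dl | apply Dl.eq
      | apply Q.dl | apply G.dl | apply Att.dl hR | apply hR
      | apply Dl.not | apply Dl.or | apply Dl.and | apply Dl.ballSub | apply Dl.ballMem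
      | apply Dl.bexSub | apply Dl.bexMem | apply Dl.imp
  have hstart : ∃ f, E f c ∧ (Att E R t w r0 f ∧
      ∃ q, E q f ∧ ∃ n, E n w ∧ ∃ s, E s q ∧ ((Q E q n s ∧ G E r0 s) ∧
        ∃ y, E y s ∧ R x0 y)) := by
    obtain ⟨⟨e, hew, hee⟩, _⟩ := hI
    obtain ⟨f, hfc, hf⟩ := hc e hew
    obtain ⟨hA, q, hq, s, hs, hQ, hG⟩ := hf hew
    refine ⟨f, hfc, hA, q, hq, e, hew, s, hs, ⟨hQ, hG⟩, y0, ?_, h0⟩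
    rcases hA.inv hM.1 hw hr0 hq hew hQ hG with ⟨_, rfl⟩ | ⟨p, m, u, _, _, _, _, hsc, _⟩
    · exact hy0
    · exact (hee m hsc.2.2 hsc.2.2).elim
  obtain ⟨x, hxt, ⟨f, hfc, hA, q, hq, n, hn, s, hs, ⟨hQ, hG⟩, y, hy, hxy⟩, hmin⟩ := minS hM.1
    (P := fun x => ∃ f, E f c ∧ (Att E R t w r0 f ∧
      ∃ q, E q f ∧ ∃ n, E n w ∧ ∃ s, E s q ∧ ((Q E q n s ∧ G E r0 s) ∧
        ∃ y, E y s ∧ R x y))) hD2 t x0 hx0 hstart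
  obtain ⟨n', hn', hsc⟩ := hI.2 n hn
  obtain ⟨f', hfc', hf'⟩ := hc n' hn'
  obtain ⟨hA', q', hq', s', hs', hQ', hG'⟩ := hf' hn'
  rcases hA'.inv hM.1 hw hr0 hq' hn' hQ' hG' with
    ⟨he, _⟩ | ⟨p, m, u, hp, hm, hQm, hGm, hscm, hL⟩
  · exact he n hsc.2.2 hsc.2.2
  · obtain rfl := hsc.inj hM.1 hscm
    obtain rfl := hA.uniq hM.1 hw hr0 hA' hn hq hQ hG hp hQm hGm
    obtain ⟨x', hx', y', hy', hR'⟩ := hL.1.2.2 x hxt ⟨y, hy, hxy⟩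
    exact hmin x' hx' (htt x hxt x' hx') ⟨f', hfc', hA', q', hq', n', hn', s', hs', ⟨hQ', hG'⟩,
      y', hy', hR'⟩

end model

end KPPProof

/-- `KP^𝒫` proves `Σ₁^𝒫`-Foundation. -/
theorem KPP_proves_sigma1P_foundation (X : Type u) (E : X → X → Prop)
    (hM : ModelKPP E) : FoundationScheme E Sigma1PC := by
  rintro n φ ⟨ψ, hψ, rfl⟩ p ⟨x0, y0, h0⟩
  by_contra hc
  push Not at hc
  refine KPPProof.main hM (R := fun x y => ψ.Eval E (Fin.snoc (Fin.snoc p x) y)) ?_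
    (fun x hx => ?_) x0 y0 h0
  · intro k t0 t1 h0 h1
    have := KPPProof.Dl.formula (E := E) (C := Delta0PC) ψ hψ
      (fun i v => (Fin.snoc (Fin.snoc p (t0 v)) (t1 v) : Fin (n + 2) → X) i) (fun i => ?_)
    · exact this
    · refine Fin.lastCases ?_ (fun j => ?_) i
      · simpa using h1
      · refine Fin.lastCases ?_ (fun j => ?_) j
        · simpa using h0
        · simpa using KPPProof.Tm.const (p j)
  · obtain ⟨x', hx', h'⟩ := hc x hx
    exact ⟨x', hx', h'⟩
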